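/- There exist δ₀ > 0 and c > 0 depending only on n ≥ 2 such that the following holds: if δ ∈ (0, δ₀], and K ⊂ ℝⁿ is an origin-symmetric convex body with K ⊆ B∞ⁿ, ±e_j ∈ ∂K for all j = 1,…,n, (1−δ)B∞ⁿ ⊆ K, and δ is minimal with this property (i.e., (1−δ′)B∞ⁿ ⊄ K for every 0 ≤ δ′ < δ), then volₙ(K)·volₙ(K*) ≥ 4ⁿ/n! + cδ. -/

import Mathlib

open MeasureTheory RealInnerProductSpace ENNReal Pointwise

noncomputable section

/-- The unit cube `B∞ⁿ = {x : |xᵢ| ≤ 1 ∀ i}`. -/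
def cube (n : ℕ) : Set (EuclideanSpace ℝ (Fin n)) := {x | ∀ i, |x i| ≤ 1}

/-- The polar body `K* = {ξ : ⟨x, ξ⟩ ≤ 1 ∀ x ∈ K}`. -/
def polarBody {n : ℕ} (K : Set (EuclideanSpace ℝ (Fin n))) :
    Set (EuclideanSpace ℝ (Fin n)) :=
  {ξ | ∀ x ∈ K, ⟪x, ξ⟫ ≤ 1}

/-- The standard basis vector `e_j` of `ℝⁿ`. -/
def stdVec (n : ℕ) (j : Fin n) : EuclideanSpace ℝ (Fin n) :=
  EuclideanSpace.single j (1 : ℝ)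

def Simp (n : ℕ) : Set (Fin n → ℝ) := {t | (∀ i, 0 < t i) ∧ ∑ i, t i < 1}

lemma simp_isOpen (n : ℕ) : IsOpen (Simp n) := by
  have : Simp n = (⋂ i, {t : Fin n → ℝ | 0 < t i}) ∩ {t | ∑ i, t i < 1} := by
    ext t; simp [Simp]
  rw [this]
  refine IsOpen.inter (isOpen_iInter_of_finite fun i => ?_) ?_
  · exact isOpen_lt continuous_const (continuous_apply i)
  · exact isOpen_lt (by fun_prop) continuous_const

def sgn (u : ℤˣ) : ℝ := ((u : ℤ) : ℝ)

lemma sgn_cases (u : ℤˣ) : sgn u = 1 ∨ sgn u = -1 := by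
  rcases Int.units_eq_one_or u with h | h <;> simp [h, sgn]

lemma sgn_mul_self (u : ℤˣ) : sgn u * sgn u = 1 := by
  rcases sgn_cases u with h | h <;> simp [h]

lemma abs_sgn (u : ℤˣ) : |sgn u| = 1 := by
  rcases sgn_cases u with h | h <;> simp [h]

lemma exists_sgn (x : ℝ) : ∃ u : ℤˣ, sgn u * x = |x| := by
  rcases le_total 0 x with h | h
  · exact ⟨1, by simp [sgn, abs_of_nonneg h]⟩
  · exact ⟨-1, by simp [sgn, abs_of_nonpos h]⟩

lemma sgn_inj {u v : ℤˣ} (h : sgn u = sgn v) : u = v := by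
  rcases Int.units_eq_one_or u with h1 | h1 <;> rcases Int.units_eq_one_or v with h2 | h2 <;>
    simp [h1, h2, sgn] at h ⊢ <;> norm_num at h

lemma simp_volume_ne_top (n : ℕ) : volume (Simp n) ≠ ⊤ := by
  have : Simp n ⊆ Set.pi Set.univ (fun _ => Set.Icc (0:ℝ) 1) := by
    intro t ht i _
    refine ⟨(ht.1 i).le, ?_⟩
    have := Finset.single_le_sum (f := t) (fun j _ => (ht.1 j).le) (Finset.mem_univ i)
    linarith [ht.2]
  refine ((measure_mono this).trans_lt ?_).ne
  rw [volume_pi_pi]; simp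

lemma simp_volume_ge (n : ℕ) :
    ENNReal.ofReal (1 / (n.factorial : ℝ)) ≤ volume (Simp n) := by
  have hball := MeasureTheory.volume_sum_rpow_lt_one (Fin n) (p := 1) le_rfl
  have hval : (ENNReal.ofReal ((2 * Real.Gamma (1 / 1 + 1)) ^ Fintype.card (Fin n) /
      Real.Gamma ((Fintype.card (Fin n) : ℝ) / 1 + 1))) = ENNReal.ofReal (2 ^ n / n.factorial) := by
    congr 2
    · norm_num [Real.Gamma_two]
    · simp [Real.Gamma_nat_eq_factorial]
  rw [hval] at hball
  let D : (Fin n → ℤˣ) → ((Fin n → ℝ) →ₗ[ℝ] (Fin n → ℝ)) := fun ε =>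
    Matrix.toLin' (Matrix.diagonal fun i => sgn (ε i))
  have hD : ∀ ε s, volume (D ε '' s) = volume s := by
    intro ε s
    rw [Measure.addHaar_image_linearMap]
    simp [D, LinearMap.det_toLin', Matrix.det_diagonal, Finset.abs_prod, abs_sgn]
  have hsub : {x : Fin n → ℝ | ∑ i, |x i| ^ (1:ℝ) < 1} ⊆
      (⋃ ε, D ε '' Simp n) ∪ ⋃ i, {x : Fin n → ℝ | x i = 0} := by
    intro x hx
    by_cases h0 : ∃ i, x i = 0
    · right; simpa using h0
    · left
      push Not at h0
      choose u hu using fun i => exists_sgn (x i)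
      refine Set.mem_iUnion.2 ⟨u, fun i => |x i|, ⟨fun i => abs_pos.2 (h0 i), by simpa using hx⟩, ?_⟩
      ext i
      simp only [D, Matrix.toLin'_apply, Matrix.mulVec_diagonal]
      rw [← hu i, ← mul_assoc, sgn_mul_self, one_mul]
  have h1 := measure_mono (μ := volume) hsub
  rw [hball] at h1
  have h2 : volume ((⋃ ε, D ε '' Simp n) ∪ ⋃ i, {x : Fin n → ℝ | x i = 0}) ≤
      2 ^ n * volume (Simp n) := by
    refine (measure_union_le _ _).trans ?_
    have : volume (⋃ i, {x : Fin n → ℝ | x i = 0}) = 0 := by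
      rw [measure_iUnion_null_iff]
      intro i
      exact Measure.pi_hyperplane _ i 0
    rw [this, add_zero]
    refine (measure_iUnion_fintype_le _ _).trans ?_
    simp [hD]
  have h3 := h1.trans h2
  have h4 : ENNReal.ofReal (2 ^ n / n.factorial) = 2 ^ n * ENNReal.ofReal (1 / n.factorial) := by
    rw [div_eq_mul_one_div, ENNReal.ofReal_mul (by positivity), ENNReal.ofReal_pow (by norm_num)]
    simp
  rw [h4] at h3
  exact (ENNReal.mul_le_mul_iff_right (by simp) (by simp)).1 h3

lemma prod_one_add_bound {ι : Type*} (s : Finset ι) (x : ι → ℝ) (e : ℝ) (he : 0 ≤ e) (he1 : e ≤ 1)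
    (hx : ∀ i ∈ s, |x i| ≤ e) :
    |∏ i ∈ s, (1 + x i) - 1 - ∑ i ∈ s, x i| ≤ 4 ^ s.card * e ^ 2 := by
  classical
  induction s using Finset.induction_on with
  | empty => simp; positivity
  | insert a s ha ih =>
    rw [Finset.prod_insert ha, Finset.sum_insert ha, Finset.card_insert_of_notMem ha]
    have ih' := ih fun i hi => hx i (Finset.mem_insert_of_mem hi)
    have hxa := hx a (Finset.mem_insert_self _ _)
    have hs : |∑ i ∈ s, x i| ≤ s.card * e := by
      refine (Finset.abs_sum_le_sum_abs _ _).trans ?_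
      refine (Finset.sum_le_card_nsmul _ _ e fun i hi => hx i (Finset.mem_insert_of_mem hi)).trans ?_
      simp
    have hc : (s.card : ℝ) ≤ 2 ^ s.card := by exact_mod_cast Nat.lt_two_pow_self.le
    have hc2 : (2:ℝ) ^ s.card ≤ 4 ^ s.card := by gcongr; norm_num
    set P := ∏ i ∈ s, (1 + x i)
    set S := ∑ i ∈ s, x i
    have : (1 + x a) * P - 1 - (x a + S) = (1 + x a) * (P - 1 - S) + x a * S := by ring
    rw [this]
    refine (abs_add_le _ _).trans ?_
    rw [abs_mul, abs_mul]
    have h1 : |1 + x a| ≤ 2 := by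
      rw [abs_le] at hxa ⊢; constructor <;> linarith
    have h2 : |1 + x a| * |P - 1 - S| ≤ 2 * (4 ^ s.card * e ^ 2) := by gcongr
    have h3 : |x a| * |S| ≤ e * (s.card * e) := by gcongr
    have h4 : e * (s.card * e) ≤ 4 ^ s.card * e ^ 2 := by
      have : (s.card : ℝ) * e ^ 2 ≤ 4 ^ s.card * e ^ 2 := by gcongr; linarith
      nlinarith
    rw [pow_succ]
    nlinarith [sq_nonneg e, show (0:ℝ) ≤ 4 ^ s.card * e ^ 2 by positivity]

lemma det_near_one (n : ℕ) : ∃ C : ℝ, 0 ≤ C ∧ ∀ (B : Matrix (Fin n) (Fin n) ℝ) (e : ℝ), 0 ≤ e → e ≤ 1 →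
    (∀ i j, |(B - 1) i j| ≤ e) → 1 + ∑ i, (B - 1) i i - C * e ^ 2 ≤ B.det := by
  refine ⟨4 ^ n + n.factorial * 2 ^ n, by positivity, ?_⟩
  intro B e he he1 hB
  rw [Matrix.det_apply']
  rw [← Finset.add_sum_erase _ _ (Finset.mem_univ (1 : Equiv.Perm (Fin n)))]
  have hdiag : |∏ i : Fin n, (1 + (B - 1) i i) - 1 - ∑ i, (B - 1) i i| ≤ 4 ^ n * e ^ 2 := by
    have := prod_one_add_bound Finset.univ (fun i => (B - 1) i i) e he he1 (fun i _ => hB i i)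
    simpa using this
  have hdiag' : ∏ i : Fin n, (1 + (B - 1) i i) = ∏ i, B i i := by
    refine Finset.prod_congr rfl fun i _ => ?_
    simp
  rw [hdiag'] at hdiag
  have hent : ∀ i j, |B i j| ≤ 2 := by
    intro i j
    have := hB i j
    have h1 : |(1 : Matrix (Fin n) (Fin n) ℝ) i j| ≤ 1 := by
      rw [Matrix.one_apply]; split_ifs <;> simp
    have h2 : B i j = (B - 1) i j + (1 : Matrix (Fin n) (Fin n) ℝ) i j := by simp
    rw [h2]
    refine (abs_add_le _ _).trans (by linarith)
  have hoff : ∀ i j, i ≠ j → |B i j| ≤ e := by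
    intro i j hij
    have := hB i j
    simpa [Matrix.one_apply, hij] using this
  have hterm : ∀ σ ∈ (Finset.univ : Finset (Equiv.Perm (Fin n))).erase 1,
      |((Equiv.Perm.sign σ : ℤ) : ℝ) * ∏ i, B (σ i) i| ≤ 2 ^ n * e ^ 2 := by
    intro σ hσ
    have hσ1 : σ ≠ 1 := (Finset.mem_erase.1 hσ).1
    obtain ⟨i, hi⟩ : ∃ i, σ i ≠ i := by
      by_contra h; push Not at h; exact hσ1 (Equiv.ext h)
    have hi2 : σ (σ i) ≠ σ i := fun h => hi (σ.injective h)
    rw [abs_mul]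
    have : |((Equiv.Perm.sign σ : ℤ) : ℝ)| = 1 := abs_sgn _
    rw [this, one_mul, Finset.abs_prod]
    rw [← Finset.mul_prod_erase _ _ (Finset.mem_univ i),
      ← Finset.mul_prod_erase _ _ (Finset.mem_erase.2 ⟨hi, Finset.mem_univ (σ i)⟩)]
    have hr : ∏ x ∈ (Finset.univ.erase i).erase (σ i), |B (σ x) x| ≤ 2 ^ n := by
      calc _ ≤ ∏ x ∈ (Finset.univ.erase i).erase (σ i), (2:ℝ) :=
            Finset.prod_le_prod (fun _ _ => abs_nonneg _) fun _ _ => hent _ _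
        _ = 2 ^ ((Finset.univ.erase i).erase (σ i)).card := by simp
        _ ≤ 2 ^ n := by
            refine pow_le_pow_right₀ (by norm_num) ?_
            refine (Finset.card_le_univ _).trans (by simp)
    have hp : 0 ≤ ∏ x ∈ (Finset.univ.erase i).erase (σ i), |B (σ x) x| :=
      Finset.prod_nonneg fun _ _ => abs_nonneg _
    calc _ ≤ e * (e * 2 ^ n) := by
          gcongr
          · exact hoff _ _ hi
          · exact hoff _ _ hi2
      _ = _ := by ring
  have hsum : |∑ σ ∈ (Finset.univ : Finset (Equiv.Perm (Fin n))).erase 1,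
      ((Equiv.Perm.sign σ : ℤ) : ℝ) * ∏ i, B (σ i) i| ≤ n.factorial * (2 ^ n * e ^ 2) := by
    refine (Finset.abs_sum_le_sum_abs _ _).trans ?_
    refine (Finset.sum_le_card_nsmul _ _ _ hterm).trans ?_
    rw [nsmul_eq_mul]
    gcongr
    refine (Finset.card_le_univ _).trans (by simp [Fintype.card_perm])
  simp only [Equiv.Perm.sign_one, Units.val_one, Int.cast_one, one_mul, Equiv.Perm.one_apply]
  rw [abs_le] at hsum hdiag
  nlinarith [hsum.1, hdiag.1]

abbrev SFlag (n : ℕ) := Equiv.Perm (Fin n) × (Fin n → ℤˣ)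

def cv {n : ℕ} (f : SFlag n) (m : Fin n) : Fin n → ℝ :=
  fun i => if f.1.symm i ≤ m then sgn (f.2 i) else 0

def cvl {n : ℕ} (f : SFlag n) (m : Fin n) : Fin n → ℝ :=
  fun i => if f.1.symm i < m then sgn (f.2 i) else 0

/-- the matrix of the points of a flag -/
def PM {n : ℕ} (Y : (Fin n → ℝ) → (Fin n → ℝ)) (f : SFlag n) : Matrix (Fin n) (Fin n) ℝ :=
  Matrix.of fun i m => Y (cv f m) i

def BM {n : ℕ} (Y : (Fin n → ℝ) → (Fin n → ℝ)) (f : SFlag n) : Matrix (Fin n) (Fin n) ℝ :=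
  Matrix.of fun l m => sgn (f.2 (f.1 l)) * (Y (cv f m) (f.1 l) - Y (cvl f m) (f.1 l))

lemma abs_det_PM {n : ℕ} (Y : (Fin n → ℝ) → (Fin n → ℝ)) (hY : Y 0 = 0) (f : SFlag n) :
    |(PM Y f).det| = |(BM Y f).det| := by
  rcases n with _ | n
  · simp
  let A : Matrix (Fin (n+1)) (Fin (n+1)) ℝ := Matrix.of fun i m => Y (cv f m) i - Y (cvl f m) i
  have h1 : (PM Y f).det = A.det := by
    refine Matrix.det_eq_of_forall_col_eq_smul_add_pred (fun _ => 1) ?_ ?_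
    · intro i
      have : cvl f 0 = 0 := by ext i; simp [cvl]
      simp [PM, A, this, hY]
    · intro i j
      have : cvl f j.succ = cv f j.castSucc := by
        ext i
        simp [cvl, cv, Fin.lt_def, Fin.le_def]
      simp [PM, A, this]
  have h2 : BM Y f = Matrix.of fun l m => sgn (f.2 (f.1 l)) * (A.submatrix f.1 id) l m := by
    ext l m; simp [BM, A]
  rw [h1, h2, Matrix.det_mul_column, abs_mul, Finset.abs_prod]
  simp only [abs_sgn, Finset.prod_const_one, one_mul]
  rw [Matrix.det_permute, abs_mul]
  have : |((Equiv.Perm.sign f.1 : ℤ) : ℝ)| = 1 := abs_sgn _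
  rw [this, one_mul]

lemma BM_sub_one {n : ℕ} (Y : (Fin n → ℝ) → (Fin n → ℝ)) (f : SFlag n) (l m : Fin n) :
    (BM Y f - 1) l m = sgn (f.2 (f.1 l)) *
      ((Y (cv f m) (f.1 l) - cv f m (f.1 l)) - (Y (cvl f m) (f.1 l) - cvl f m (f.1 l))) := by
  have h : cv f m (f.1 l) - cvl f m (f.1 l) = if l = m then sgn (f.2 (f.1 l)) else 0 := by
    simp only [cv, cvl, Equiv.symm_apply_apply]
    rcases lt_trichotomy l m with h | h | h
    · simp [h, h.le, h.ne]
    · simp [h]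
    · simp [h.not_gt, h.not_ge, h.ne']
  have h2 : (1 : Matrix (Fin n) (Fin n) ℝ) l m =
      sgn (f.2 (f.1 l)) * (cv f m (f.1 l) - cvl f m (f.1 l)) := by
    rw [h, Matrix.one_apply]
    split_ifs <;> simp [sgn_mul_self]
  rw [Matrix.sub_apply, h2]
  simp only [BM, Matrix.of_apply]
  ring

lemma sum_cvl_zero {n : ℕ} (e : (Fin n → ℝ) → (Fin n → ℝ)) (m : Fin n) :
    ∑ f : SFlag n, sgn (f.2 (f.1 m)) * e (cvl f m) (f.1 m) = 0 := by
  rw [Fintype.sum_prod_type]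
  refine Finset.sum_eq_zero fun σ _ => ?_
  have h := Equiv.sum_comp (Equiv.mulRight (Pi.mulSingle (σ m) (-1 : ℤˣ)))
    (fun ε : Fin n → ℤˣ => sgn (ε (σ m)) * e (cvl (σ, ε) m) (σ m))
  have h2 : ∀ ε : Fin n → ℤˣ,
      sgn ((Equiv.mulRight (Pi.mulSingle (σ m) (-1 : ℤˣ)) ε) (σ m)) *
        e (cvl (σ, Equiv.mulRight (Pi.mulSingle (σ m) (-1 : ℤˣ)) ε) m) (σ m)
      = - (sgn (ε (σ m)) * e (cvl (σ, ε) m) (σ m)) := by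
    intro ε
    have h3 : cvl (σ, Equiv.mulRight (Pi.mulSingle (σ m) (-1 : ℤˣ)) ε) m = cvl (σ, ε) m := by
      ext i
      simp only [cvl]
      split_ifs with hi
      · have : i ≠ σ m := by rintro rfl; simp at hi
        simp [Pi.mulSingle_eq_of_ne this]
      · rfl
    rw [h3]
    simp [sgn]
  simp only [h2, Finset.sum_neg_distrib] at h
  simp only
  linarith

lemma sum_cv_swap {n : ℕ} (e : (Fin n → ℝ) → (Fin n → ℝ)) (m l : Fin n) (hl : l ≤ m) :
    ∑ f : SFlag n, sgn (f.2 (f.1 m)) * e (cv f m) (f.1 m) =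
    ∑ f : SFlag n, sgn (f.2 (f.1 l)) * e (cv f m) (f.1 l) := by
  rw [← Equiv.sum_comp ((Equiv.mulRight (Equiv.swap l m)).prodCongr (Equiv.refl (Fin n → ℤˣ)))]
  refine Finset.sum_congr rfl fun f _ => ?_
  have h3 : cv (((Equiv.mulRight (Equiv.swap l m)).prodCongr (Equiv.refl (Fin n → ℤˣ))) f) m
      = cv f m := by
    ext i
    have : (f.1 * Equiv.swap l m).symm i = Equiv.swap l m (f.1.symm i) := by
      rw [Equiv.symm_apply_eq]
      simp
    simp only [cv, Equiv.prodCongr_apply, Prod.map_fst, Prod.map_snd, Equiv.coe_mulRight, this,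
      Equiv.refl_apply]
    have : (Equiv.swap l m) (f.1.symm i) ≤ m ↔ f.1.symm i ≤ m := by
      rw [Equiv.swap_apply_def]
      split_ifs with h1 h2
      · simp [h1, hl]
      · simp [h2, hl]
      · rfl
    simp [this]
  rw [h3]
  simp

lemma trace_sum {n : ℕ} (e : (Fin n → ℝ) → (Fin n → ℝ)) :
    ∑ f : SFlag n, ∑ m, sgn (f.2 (f.1 m)) * (e (cv f m) (f.1 m) - e (cvl f m) (f.1 m)) =
    ∑ f : SFlag n, ∑ m : Fin n, (1 / ((m : ℝ) + 1)) * ∑ i, cv f m i * e (cv f m) i := by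
  rw [Finset.sum_comm, Finset.sum_comm (s := Finset.univ (α := SFlag n))]
  refine Finset.sum_congr rfl fun m _ => ?_
  simp only [mul_sub, Finset.sum_sub_distrib, sum_cvl_zero, sub_zero]
  rw [← Finset.mul_sum, one_div, inv_mul_eq_div, _root_.eq_div_iff (by positivity)]
  have h : ∑ f : SFlag n, ∑ i, cv f m i * e (cv f m) i =
      ∑ l ∈ Finset.Iic m, ∑ f : SFlag n, sgn (f.2 (f.1 l)) * e (cv f m) (f.1 l) := by
    symm
    rw [Finset.sum_comm]
    refine Finset.sum_congr rfl fun f _ => ?_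
    symm
    rw [← Equiv.sum_comp f.1]
    have : Finset.Iic m = Finset.univ.filter (fun l => l ≤ m) := by ext; simp
    rw [this, Finset.sum_filter]
    refine Finset.sum_congr rfl fun l _ => ?_
    simp only [cv, Equiv.symm_apply_apply]
    split_ifs <;> simp
  rw [h, Finset.sum_congr rfl (fun l hl => (sum_cv_swap e m l (Finset.mem_Iic.1 hl)).symm)]
  simp
  ring

def tl {n : ℕ} (t : Fin n → ℝ) (l : Fin n) : ℝ := ∑ m ∈ Finset.Ici l, t m

lemma tl_eq {n : ℕ} (t : Fin n → ℝ) (l : Fin n) : tl t l = t l + ∑ m ∈ Finset.Ioi l, t m := by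
  rw [tl, ← Finset.Ioi_insert, Finset.sum_insert (by simp)]

lemma Ioi_cases {n : ℕ} (l : Fin n) : Finset.Ioi l = ∅ ∨ ∃ l', l < l' ∧ Finset.Ioi l = Finset.Ici l' := by
  by_cases h : l.1 + 1 < n
  · right
    refine ⟨⟨l.1 + 1, h⟩, by simp [Fin.lt_def], ?_⟩
    ext m
    rw [Finset.mem_Ioi, Finset.mem_Ici, Fin.lt_def, Fin.le_def]
    exact Nat.succ_le_iff.symm
  · left
    ext m
    simp only [Finset.mem_Ioi, Fin.lt_def, Finset.notMem_empty, iff_false]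
    omega

lemma base_eq {n : ℕ} (f : SFlag n) (t : Fin n → ℝ) (i : Fin n) :
    ∑ m, cv f m i * t m = sgn (f.2 i) * tl t (f.1.symm i) := by
  have : Finset.Ici (f.1.symm i) = Finset.univ.filter (fun m => f.1.symm i ≤ m) := by ext; simp
  rw [tl, this, Finset.sum_filter, Finset.mul_sum]
  refine Finset.sum_congr rfl fun m _ => ?_
  simp only [cv]
  split_ifs <;> simp

lemma PM_mulVec {n : ℕ} (Y : (Fin n → ℝ) → (Fin n → ℝ)) (f : SFlag n) (t : Fin n → ℝ) (i : Fin n) :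
    (PM Y f).mulVec t i = sgn (f.2 i) * tl t (f.1.symm i) +
      ∑ m, t m * (Y (cv f m) i - cv f m i) := by
  rw [← base_eq, ← Finset.sum_add_distrib]
  simp only [Matrix.mulVec, dotProduct, PM, Matrix.of_apply]
  refine Finset.sum_congr rfl fun m _ => ?_
  ring

lemma inv_bound {n : ℕ} (Y : (Fin n → ℝ) → (Fin n → ℝ)) (f : SFlag n) (η : ℝ)
    (hY : ∀ m i, |Y (cv f m) i - cv f m i| ≤ η) (hη : 4 * n * η ≤ 1) (μ u : Fin n → ℝ)
    (hu : (PM Y f).mulVec μ = u) (U : ℝ) (hU : ∀ i, |u i| ≤ U) : ∑ m, |μ m| ≤ 4 * n * U := by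
  set M := ∑ m, |μ m| with hM
  have hR : ∀ l, |tl μ l| ≤ U + η * M := by
    intro l
    have h1 := PM_mulVec Y f μ (f.1 l)
    rw [hu, Equiv.symm_apply_apply] at h1
    have h2 : |tl μ l| = |sgn (f.2 (f.1 l)) * tl μ l| := by rw [abs_mul, abs_sgn, one_mul]
    have h3 : sgn (f.2 (f.1 l)) * tl μ l = u (f.1 l) -
      ∑ m, μ m * (Y (cv f m) (f.1 l) - cv f m (f.1 l)) := by linarith
    rw [h2, h3]
    refine (abs_sub _ _).trans (add_le_add (hU _) ?_)
    refine (Finset.abs_sum_le_sum_abs _ _).trans ?_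
    rw [hM, Finset.mul_sum]
    refine Finset.sum_le_sum fun m _ => ?_
    rw [abs_mul, mul_comm]
    gcongr
    exact hY m _
  have hm : ∀ l, |μ l| ≤ 2 * (U + η * M) := by
    intro l
    have h := tl_eq μ l
    have h1 := hR l
    rcases Ioi_cases l with h2 | ⟨l', -, h2⟩
    · rw [h2] at h
      simp only [Finset.sum_empty, add_zero] at h
      rw [← h]; linarith [abs_nonneg (tl μ l)]
    · rw [h2] at h
      change tl μ l = μ l + tl μ l' at h
      have h3 := hR l'
      rw [abs_le] at *
      constructor <;> linarith [h1.1, h1.2, h3.1, h3.2]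
  have hs : M ≤ n * (2 * (U + η * M)) := by
    have := Finset.sum_le_card_nsmul Finset.univ (fun m => |μ m|) _ (fun m _ => hm m)
    simpa using this
  have hM0 : 0 ≤ M := Finset.sum_nonneg fun _ _ => abs_nonneg _
  nlinarith [mul_le_mul_of_nonneg_right hη hM0]

lemma PM_injective {n : ℕ} (Y : (Fin n → ℝ) → (Fin n → ℝ)) (f : SFlag n) (η : ℝ)
    (hY : ∀ m i, |Y (cv f m) i - cv f m i| ≤ η) (hη : 4 * n * η ≤ 1) :
    Function.Injective (Matrix.toLin' (PM Y f)) := by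
  rw [injective_iff_map_eq_zero]
  intro μ hμ
  rw [Matrix.toLin'_apply] at hμ
  have h := inv_bound Y f η hY hη μ 0 hμ 0 (by simp)
  simp only [mul_zero] at h
  have h2 : ∑ m, |μ m| = 0 := le_antisymm h (Finset.sum_nonneg fun _ _ => abs_nonneg _)
  rw [Finset.sum_eq_zero_iff_of_nonneg (fun _ _ => abs_nonneg _)] at h2
  ext m
  simpa using h2 m (Finset.mem_univ m)

lemma PM_solve {n : ℕ} (Y : (Fin n → ℝ) → (Fin n → ℝ)) (f : SFlag n) (η : ℝ)
    (hY : ∀ m i, |Y (cv f m) i - cv f m i| ≤ η) (hη : 4 * n * η ≤ 1) (u : Fin n → ℝ)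
    (U : ℝ) (hU : ∀ i, |u i| ≤ U) :
    ∃ μ : Fin n → ℝ, (PM Y f).mulVec μ = u ∧ ∑ m, |μ m| ≤ 4 * n * U := by
  obtain ⟨μ, hμ⟩ := (LinearMap.injective_iff_surjective.1 (PM_injective Y f η hY hη)) u
  rw [Matrix.toLin'_apply] at hμ
  exact ⟨μ, hμ, inv_bound Y f η hY hη μ u hμ U hU⟩

lemma cv_inj {n : ℕ} (f : SFlag n) {m m' : Fin n} (h : cv f m = cv f m') : m = m' := by
  have hne : ∀ u, sgn u ≠ 0 := fun u => by rcases sgn_cases u with h | h <;> simp [h]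
  have h1 := congrFun h (f.1 m)
  have h2 := congrFun h (f.1 m')
  simp only [cv, Equiv.symm_apply_apply, le_refl, if_true] at h1 h2
  apply le_antisymm
  · by_contra hc; simp [hc] at h1; exact hne _ h1
  · by_contra hc; simp [hc] at h2; exact hne _ h2.symm

open Classical in
def Ph {n : ℕ} (f : SFlag n) (t : Fin n → ℝ) (s : Fin n → ℝ) : ℝ :=
  ∑ m, if s = cv f m then t m else 0

lemma Ph_cv {n : ℕ} (f : SFlag n) (t : Fin n → ℝ) (k : Fin n) : Ph f t (cv f k) = t k := by
  rw [Ph, Finset.sum_eq_single k]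
  · simp
  · intro m _ hm
    rw [if_neg]
    intro h; exact hm (cv_inj f h).symm
  · simp

lemma Ph_not {n : ℕ} (f : SFlag n) (t : Fin n → ℝ) (s : Fin n → ℝ) (h : ∀ m, s ≠ cv f m) :
    Ph f t s = 0 := by
  rw [Ph]; refine Finset.sum_eq_zero fun m _ => ?_
  rw [if_neg (h m)]

lemma tl_pos {n : ℕ} (t : Fin n → ℝ) (ht : ∀ m, 0 < t m) (l : Fin n) : 0 < tl t l := by
  rw [tl_eq]
  have : 0 ≤ ∑ m ∈ Finset.Ioi l, t m := Finset.sum_nonneg fun m _ => (ht m).le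
  linarith [ht l]

lemma tl_anti {n : ℕ} (t : Fin n → ℝ) (ht : ∀ m, 0 < t m) {l l' : Fin n} (h : l < l') :
    tl t l' + t l ≤ tl t l := by
  rw [tl_eq t l, add_comm]
  have : tl t l' ≤ ∑ m ∈ Finset.Ioi l, t m := by
    refine Finset.sum_le_sum_of_subset_of_nonneg ?_ fun m _ _ => (ht m).le
    intro m hm
    rw [Finset.mem_Ici] at hm
    exact Finset.mem_Ioi.2 (h.trans_le hm)
  linarith

lemma tl_anti' {n : ℕ} (t : Fin n → ℝ) (ht : ∀ m, 0 < t m) {l l' : Fin n} (h : l ≤ l') :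
    tl t l' ≤ tl t l := by
  rcases h.eq_or_lt with rfl | h
  · rfl
  · linarith [tl_anti t ht h, ht l]

/-- the point of the cone with given coordinates -/
def bp {n : ℕ} (f : SFlag n) (t : Fin n → ℝ) : Fin n → ℝ :=
  fun i => sgn (f.2 i) * tl t (f.1.symm i)

lemma abs_bp {n : ℕ} (f : SFlag n) (t : Fin n → ℝ) (ht : ∀ m, 0 < t m) (i : Fin n) :
    |bp f t i| = tl t (f.1.symm i) := by
  rw [bp, abs_mul, abs_sgn, one_mul, abs_of_pos (tl_pos t ht _)]

lemma Ph_lower {n : ℕ} (f : SFlag n) (t : Fin n → ℝ) (ht : ∀ m, 0 < t m) (k i : Fin n)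
    (hi : cv f k i ≠ 0) : t k ≤ cv f k i * bp f t i ∧
      ∀ j, cv f k j = 0 → t k ≤ cv f k i * bp f t i - |bp f t j| := by
  have hik : f.1.symm i ≤ k := by
    by_contra h; simp [cv, h] at hi
  have h1 : cv f k i * bp f t i = tl t (f.1.symm i) := by
    simp only [cv, hik, if_true, bp]
    rw [← mul_assoc, sgn_mul_self, one_mul]
  have h2 := tl_anti' t ht hik
  rw [h1]
  constructor
  · have := tl_eq t k
    have h3 : 0 ≤ ∑ m ∈ Finset.Ioi k, t m := Finset.sum_nonneg fun m _ => (ht m).le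
    linarith
  · intro j hj
    have hjk : k < f.1.symm j := by
      by_contra h
      rw [not_lt] at h
      simp only [cv, h, if_true] at hj
      have := sgn_mul_self (f.2 j)
      simp [hj] at this
    rw [abs_bp f t ht]
    linarith [tl_anti t ht hjk]

lemma Ph_upper {n : ℕ} (g h : SFlag n) (r : Fin n → ℝ) (hr : ∀ m, 0 < r m) (k : Fin n) :
    ∃ i, cv h k i ≠ 0 ∧ (cv h k i * bp g r i ≤ Ph g r (cv h k) ∨
      ∃ j, cv h k j = 0 ∧ cv h k i * bp g r i - |bp g r j| ≤ Ph g r (cv h k)) := by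
  set s := cv h k with hs
  have hne : ∀ u, sgn u ≠ 0 := fun u => by rcases sgn_cases u with h | h <;> simp [h]
  by_cases hc : ∃ m, s = cv g m
  · obtain ⟨m, hm⟩ := hc
    refine ⟨g.1 m, ?_, ?_⟩
    · simp [hm, cv, hne]
    · have h1 : s (g.1 m) * bp g r (g.1 m) = tl r m := by
        simp only [hm, cv, bp, Equiv.symm_apply_apply, le_refl, if_true]
        rw [← mul_assoc, sgn_mul_self, one_mul]
      rw [h1, hm, Ph_cv]
      rcases Ioi_cases m with h2 | ⟨l', hl', h2⟩
      · left
        rw [tl_eq, h2]; simp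
      · right
        refine ⟨g.1 l', by simp [cv, hl'], ?_⟩
        rw [abs_bp g r hr, Equiv.symm_apply_apply, tl_eq, h2, tl]
        linarith
  · push Not at hc
    rw [Ph_not g r s hc]
    by_cases hsg : ∃ i, s i ≠ 0 ∧ s i ≠ sgn (g.2 i)
    · obtain ⟨i, hi, hi2⟩ := hsg
      refine ⟨i, hi, Or.inl ?_⟩
      have h3 : s i = - sgn (g.2 i) := by
        simp only [hs, cv] at hi hi2 ⊢
        split_ifs at hi hi2 ⊢ with h4
        · rcases sgn_cases (h.2 i) with h5 | h5 <;> rcases sgn_cases (g.2 i) with h6 | h6 <;>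
            simp_all
        · exact absurd rfl hi
      rw [h3, bp, neg_mul, ← mul_assoc, sgn_mul_self, one_mul]
      linarith [tl_pos r hr (g.1.symm i)]
    · push Not at hsg
      -- the last index of the support
      have hne' : (Finset.univ.filter fun i => s i ≠ 0).Nonempty :=
        ⟨h.1 k, by simp [hs, cv, hne]⟩
      obtain ⟨i, hi, himax⟩ := Finset.exists_max_image _ (fun i => g.1.symm i) hne'
      simp only [Finset.mem_filter, Finset.mem_univ, true_and] at hi himax
      obtain ⟨j, hj, hji⟩ : ∃ j, s j = 0 ∧ g.1.symm j ≤ g.1.symm i := by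
        by_contra hcon
        push Not at hcon
        apply hc (g.1.symm i)
        ext j
        simp only [cv]
        split_ifs with h7
        · exact hsg j (fun h0 => absurd h7 (not_le.2 (hcon j h0)))
        · by_contra h8; exact h7 (himax j h8)
      refine ⟨i, hi, Or.inr ⟨j, hj, ?_⟩⟩
      rw [abs_bp g r hr, hsg i hi, bp, ← mul_assoc, sgn_mul_self, one_mul]
      linarith [tl_anti' r hr hji]

lemma Ph_nonneg {n : ℕ} (f : SFlag n) (t : Fin n → ℝ) (ht : ∀ m, 0 < t m) (s : Fin n → ℝ) :
    0 ≤ Ph f t s := by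
  rw [Ph]; refine Finset.sum_nonneg fun m _ => ?_
  split_ifs
  · exact (ht m).le
  · rfl

lemma Ph_le {n : ℕ} (f g h : SFlag n) (t r : Fin n → ℝ) (ht : ∀ m, 0 < t m) (hr : ∀ m, 0 < r m)
    (k : Fin n) : Ph f t (cv h k) ≤ Ph g r (cv h k) + 2 * ‖bp f t - bp g r‖ := by
  by_cases hc : ∃ m, cv h k = cv f m
  · obtain ⟨m, hm⟩ := hc
    obtain ⟨i, hi, hor⟩ := Ph_upper g h r hr k
    have hd : ∀ i, |bp f t i - bp g r i| ≤ ‖bp f t - bp g r‖ := fun i =>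
      norm_le_pi_norm (bp f t - bp g r) i
    have habs : |cv h k i| ≤ 1 := by
      simp only [cv]; split_ifs <;> simp [abs_sgn]
    have h1 : cv h k i * bp f t i ≤ cv h k i * bp g r i + ‖bp f t - bp g r‖ := by
      have : cv h k i * (bp f t i - bp g r i) ≤ ‖bp f t - bp g r‖ := by
        refine (le_abs_self _).trans ?_
        rw [abs_mul]
        calc _ ≤ 1 * |bp f t i - bp g r i| := by gcongr
          _ ≤ _ := by rw [one_mul]; exact hd i
      linarith
    have h2 : Ph f t (cv h k) = t m := by rw [hm, Ph_cv]
    have h3 := Ph_lower f t ht m i (by rwa [← hm])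
    rw [← hm] at h3
    rw [h2]
    rcases hor with h4 | ⟨j, hj, h4⟩
    · linarith [h3.1, norm_nonneg (bp f t - bp g r)]
    · have h5 := h3.2 j hj
      have h6 : |bp g r j| ≤ |bp f t j| + ‖bp f t - bp g r‖ := by
        have := abs_sub_abs_le_abs_sub (bp g r j) (bp f t j)
        rw [abs_sub_comm] at this
        linarith [hd j]
      linarith
  · push Not at hc
    rw [Ph_not f t _ hc]
    have := Ph_nonneg g r hr (cv h k)
    positivity

lemma flag_disjoint {n : ℕ} (Y : (Fin n → ℝ) → (Fin n → ℝ)) (η : ℝ)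
    (hY : ∀ f m i, |Y (cv f m) i - cv f m i| ≤ η) (hη0 : 0 ≤ η) (hη : 8 * n * η ≤ 1)
    (f g : SFlag n) (t r : Fin n → ℝ) (ht : ∀ m, 0 < t m) (hr : ∀ m, 0 < r m)
    (heq : (PM Y f).mulVec t = (PM Y g).mulVec r) : f = g := by
  classical
  set d := ‖bp f t - bp g r‖ with hd
  let F : Finset (Fin n → ℝ) := Finset.univ.image (cv f) ∪ Finset.univ.image (cv g)
  have hF : ∀ s ∈ F, ∃ h k, s = cv h k := by
    intro s hs
    simp only [F, Finset.mem_union, Finset.mem_image, Finset.mem_univ, true_and] at hs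
    rcases hs with ⟨k, rfl⟩ | ⟨k, rfl⟩
    · exact ⟨f, k, rfl⟩
    · exact ⟨g, k, rfl⟩
  have hFc : (F.card : ℝ) ≤ 2 * n := by
    have h1 := Finset.card_union_le (Finset.univ.image (cv f)) (Finset.univ.image (cv g))
    have h2 := Finset.card_image_le (s := Finset.univ) (f := cv f)
    have h3 := Finset.card_image_le (s := Finset.univ) (f := cv g)
    simp only [Finset.card_univ, Fintype.card_fin] at h2 h3
    have : F.card ≤ 2 * n := by
      refine h1.trans ?_
      omega
    exact_mod_cast this
  have key : ∀ (f' : SFlag n) (t' : Fin n → ℝ), (∀ m, cv f' m ∈ F) → ∀ i,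
      ∑ m, t' m * (Y (cv f' m) i - cv f' m i) = ∑ s ∈ F, Ph f' t' s * (Y s i - s i) := by
    intro f' t' hm i
    simp only [Ph, Finset.sum_mul]
    rw [Finset.sum_comm]
    refine Finset.sum_congr rfl fun m _ => ?_
    rw [Finset.sum_eq_single (cv f' m)]
    · simp
    · intro s _ hs; simp [hs]
    · intro h; exact absurd (hm m) h
  have hbound : ∀ i, |bp f t i - bp g r i| ≤ 2 * n * (2 * d * η) := by
    intro i
    have h1 := congrFun heq i
    rw [PM_mulVec, PM_mulVec, key f t (fun m => by simp [F]), key g r (fun m => by simp [F])] at h1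
    have h2 : bp f t i - bp g r i = ∑ s ∈ F, (Ph g r s - Ph f t s) * (Y s i - s i) := by
      simp only [sub_mul, Finset.sum_sub_distrib] at h1 ⊢
      simp only [bp]
      linarith
    rw [h2]
    refine (Finset.abs_sum_le_sum_abs _ _).trans ?_
    refine (Finset.sum_le_card_nsmul _ _ (2 * d * η) fun s hs => ?_).trans ?_
    · obtain ⟨h, k, rfl⟩ := hF s hs
      rw [abs_mul]
      have ha := Ph_le f g h t r ht hr k
      have hb := Ph_le g f h r t hr ht k
      rw [norm_sub_rev] at hb
      gcongr
      · rw [abs_le]; constructor <;> linarith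
      · exact hY h k i
    · rw [nsmul_eq_mul]
      gcongr
  have hd0 : 0 ≤ d := norm_nonneg _
  have hd1 : d ≤ 2 * n * (2 * d * η) := by
    rw [hd]
    refine (pi_norm_le_iff_of_nonneg (by positivity)).2 fun i => ?_
    exact hbound i
  have hd2 : d = 0 := by nlinarith [mul_le_mul_of_nonneg_right hη hd0]
  have hab : bp f t = bp g r := by
    rw [hd, norm_eq_zero, sub_eq_zero] at hd2; exact hd2
  have hmono : ∀ (f' : SFlag n) (t' : Fin n → ℝ), (∀ m, 0 < t' m) → 
      StrictMono (fun l => - |bp f' t' (f'.1 l)|) := by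
    intro f' t' ht' l l' hl
    simp only [abs_bp f' t' ht', Equiv.symm_apply_apply]
    linarith [tl_anti t' ht' hl, ht' l]
  have h1 := hmono f t ht
  have h2 := hmono g r hr
  rw [hab] at h1
  have hrange : Set.range (fun l => - |bp g r (f.1 l)|) = Set.range (fun l => - |bp g r (g.1 l)|) := by
    have e1 := f.1.surjective.range_comp (fun i => - |bp g r i|)
    have e2 := g.1.surjective.range_comp (fun i => - |bp g r i|)
    simp only [Function.comp_def] at e1 e2
    rw [e1, e2]
  have h3 := (StrictMono.range_inj h1 h2).1 hrange
  have h4 : f.1 = g.1 := by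
    ext1 l
    have h5 := congrFun h3 l
    have h6 := h2.injective (a₁ := g.1.symm (f.1 l)) (a₂ := l) (by simpa using h5)
    rw [Equiv.symm_apply_eq] at h6
    exact h6
  refine Prod.ext h4 (funext fun i => ?_)
  have h5 := congrFun hab i
  simp only [bp] at h5
  have p1 := tl_pos t ht (f.1.symm i)
  have p2 := tl_pos r hr (g.1.symm i)
  apply sgn_inj
  rcases sgn_cases (f.2 i) with h6 | h6 <;> rcases sgn_cases (g.2 i) with h7 | h7 <;>
    rw [h6, h7] at h5 ⊢ <;> linarith

lemma ext_region {n : ℕ} (hn : 1 ≤ n) (la : Fin n → ℝ) (k : ℝ) (hk0 : 0 ≤ k) (hk1 : k < 1)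
    (hla : ∀ m, 0 ≤ la m) (hsum : 1 + k ≤ ∑ m, la m) :
    ∃ E : Set (Fin n → ℝ), MeasurableSet E ∧ (∀ t ∈ E, ∀ m, 0 < t m) ∧ Disjoint (Simp n) E ∧
      (∀ t ∈ E, ∃ b ∈ Simp n, t = (1/2 : ℝ) • b + (1/2 : ℝ) • la) ∧
      ENNReal.ofReal ((1/2)^n * k) * volume (Simp n) ≤ volume E := by
  let B : Set (Fin n → ℝ) := Simp n \ ((1 - k) • Simp n)
  have hk : 0 < 1 - k := by linarith
  have hopen : IsOpen ((1 - k) • Simp n) := (simp_isOpen n).smul₀ hk.ne'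
  have hBm : MeasurableSet B := (simp_isOpen n).measurableSet.diff hopen.measurableSet
  have hBsum : ∀ b ∈ B, 1 - k ≤ ∑ m, b m := by
    rintro b ⟨h1, h2⟩
    by_contra h
    push Not at h
    apply h2
    rw [Set.mem_smul_set_iff_inv_smul_mem₀ hk.ne']
    refine ⟨fun i => ?_, ?_⟩
    · simp only [Pi.smul_apply, smul_eq_mul]
      have := h1.1 i
      positivity
    · simp only [Pi.smul_apply, smul_eq_mul]
      rw [← Finset.mul_sum, inv_mul_lt_iff₀ hk]
      linarith
  let T : (Fin n → ℝ) → (Fin n → ℝ) := fun t => (2:ℝ) • t + (-la)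
  have hTc : Continuous T := by fun_prop
  have hT : ∀ t, t = (1/2 : ℝ) • (T t) + (1/2 : ℝ) • la := by
    intro t; ext i; simp [T]
  refine ⟨T ⁻¹' B, hBm.preimage hTc.measurable, ?_, ?_, ?_, ?_⟩
  · intro t ht m
    have h1 := congrFun (hT t) m
    simp only [Pi.add_apply, Pi.smul_apply, smul_eq_mul] at h1
    have h2 := ht.1.1 m
    have h3 := hla m
    rw [h1]; linarith
  · rw [Set.disjoint_left]
    intro t ht1 ht2
    have h1 := hBsum _ ht2
    have h2 : ∑ m, t m = (1/2) * ∑ m, T t m + (1/2) * ∑ m, la m := by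
      rw [Finset.mul_sum, Finset.mul_sum, ← Finset.sum_add_distrib]
      refine Finset.sum_congr rfl fun m _ => ?_
      have := congrFun (hT t) m
      simpa using this
    linarith [ht1.2]
  · intro t ht
    exact ⟨T t, ht.1, hT t⟩
  · have e1 : T ⁻¹' B = (fun t => (2:ℝ) • t) ⁻¹' ((fun t => t + (-la)) ⁻¹' B) := rfl
    rw [e1, Measure.addHaar_preimage_smul _ two_ne_zero, measure_preimage_add_right]
    have hsub : (1 - k) • Simp n ⊆ Simp n := by
      rintro _ ⟨b, hb, rfl⟩
      refine ⟨fun i => ?_, ?_⟩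
      · have := hb.1 i
        simp only [Pi.smul_apply, smul_eq_mul]
        positivity
      · simp only [Pi.smul_apply, smul_eq_mul]
        rw [← Finset.mul_sum]
        have := hb.2
        nlinarith
    have hV := simp_volume_ne_top n
    have h2 : volume B = volume (Simp n) - volume ((1 - k) • Simp n) :=
      measure_sdiff hsub hopen.measurableSet.nullMeasurableSet
        ((measure_mono hsub).trans_lt hV.lt_top).ne
    rw [h2, Measure.addHaar_smul]
    simp only [Module.finrank_fintype_fun_eq_card, Fintype.card_fin]
    have h3 : |(1 - k) ^ n| ≤ 1 - k := by
      rw [abs_of_nonneg (by positivity)]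
      calc (1-k)^n ≤ (1-k)^1 := pow_le_pow_of_le_one hk.le (by linarith) hn
        _ = _ := pow_one _
    have h4 : ENNReal.ofReal k * volume (Simp n) ≤
        volume (Simp n) - ENNReal.ofReal |(1-k)^n| * volume (Simp n) := by
      apply ENNReal.le_sub_of_add_le_right
      · exact ENNReal.mul_ne_top ENNReal.ofReal_ne_top hV
      · rw [← add_mul, ← ENNReal.ofReal_add hk0 (abs_nonneg _)]
        calc _ ≤ ENNReal.ofReal 1 * volume (Simp n) := by
              gcongr; linarith
          _ = _ := by simp
    have h5 : |((2:ℝ) ^ n)⁻¹| = (1/2)^n := by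
      rw [abs_of_nonneg (by positivity), one_div, inv_pow]
    rw [h5, ENNReal.ofReal_mul (by positivity), mul_assoc]
    gcongr

lemma cvx_sum_mem {n : ℕ} {Q : Set (Fin n → ℝ)} (hQ : Convex ℝ Q) (h0 : (0 : Fin n → ℝ) ∈ Q)
    {ι : Type*} [Fintype ι] (z : ι → (Fin n → ℝ)) (t : ι → ℝ) (ht : ∀ m, 0 ≤ t m)
    (hs : ∑ m, t m ≤ 1) (hz : ∀ m, z m ∈ Q) : ∑ m, t m • z m ∈ Q := by
  have h := hQ.sum_mem (t := Finset.univ) (w := fun o : Option ι => o.elim (1 - ∑ m, t m) t)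
    (z := fun o : Option ι => o.elim 0 z) ?_ ?_ ?_
  · simpa [Fintype.sum_option] using h
  · rintro (_ | m) _
    · simpa using hs
    · exact ht m
  · simp [Fintype.sum_option]
  · rintro (_ | m) _
    · exact h0
    · exact hz m

lemma vol_lemma {n : ℕ} (hn : 1 ≤ n) (Q : Set (Fin n → ℝ)) (hQ : Convex ℝ Q) (h0 : (0 : Fin n → ℝ) ∈ Q)
    (w : Fin n → ℝ) (hw : ∀ m, 0 < w m) (Y : (Fin n → ℝ) → (Fin n → ℝ)) (η : ℝ) (hη0 : 0 ≤ η)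
    (hY : ∀ f m i, |Y (cv f m) i - cv f m i| ≤ η) (hη : 8 * n * η ≤ 1)
    (hmem : ∀ f m, w m • Y (cv f m) ∈ Q)
    (f0 : SFlag n) (la : Fin n → ℝ) (k : ℝ) (hk0 : 0 ≤ k) (hk1 : k ≤ 1)
    (hla : ∀ m, -(1 / (n:ℝ)) ≤ la m) (hsum : 1 + k ≤ ∑ m, la m)
    (hQla : ∑ m, la m • (w m • Y (cv f0 m)) ∈ Q) :
    ENNReal.ofReal ((∏ m, w m) * (∑ f, |(PM Y f).det| + (1/2)^n * (k/2) * |(PM Y f0).det|)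
      * (1 / (n.factorial : ℝ))) ≤ volume Q := by
  classical
  have hn0 : (0:ℝ) < n := by exact_mod_cast hn
  let la' : Fin n → ℝ := fun m => la m / 2 + 1 / (2 * n)
  have hla'0 : ∀ m, 0 ≤ la' m := by
    intro m
    have := hla m
    have e : 1 / (2 * (n:ℝ)) = (1 / n) / 2 := by field_simp
    simp only [la', e]; linarith
  have hla's : 1 + k / 2 ≤ ∑ m, la' m := by
    simp only [la', Finset.sum_add_distrib, ← Finset.sum_div]
    simp
    have : (n:ℝ) / (2 * n) = 1/2 := by field_simp
    rw [this]
    linarith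
  obtain ⟨E, hEm, hEpos, hEd, hEb, hEv⟩ := ext_region hn la' (k/2) (by linarith) (by linarith)
    hla'0 hla's
  let N : SFlag n → Matrix (Fin n) (Fin n) ℝ := fun f => Matrix.of fun i m => w m * PM Y f i m
  have hNdet : ∀ f, (N f).det = (∏ m, w m) * (PM Y f).det := by
    intro f; exact Matrix.det_mul_row w (PM Y f)
  have hNv : ∀ f t, (N f).mulVec t = (PM Y f).mulVec (fun m => w m * t m) := by
    intro f t; ext i
    simp only [Matrix.mulVec, dotProduct, N, Matrix.of_apply]
    refine Finset.sum_congr rfl fun m _ => ?_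
    ring
  have hNs : ∀ f t, (N f).mulVec t = ∑ m, t m • (w m • Y (cv f m)) := by
    intro f t; ext i
    simp only [Matrix.mulVec, dotProduct, N, Matrix.of_apply, PM, Finset.sum_apply, Pi.smul_apply,
      smul_eq_mul]
    refine Finset.sum_congr rfl fun m _ => ?_
    ring
  have hη4 : 4 * n * η ≤ 1 := by nlinarith [mul_nonneg hn0.le hη0]
  have hinj : ∀ f, Function.Injective (Matrix.toLin' (N f)) := by
    intro f t r htr
    rw [Matrix.toLin'_apply, Matrix.toLin'_apply, hNv, hNv] at htr
    have := PM_injective Y f η (hY f) hη4 (a₁ := fun m => w m * t m) (a₂ := fun m => w m * r m)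
      (by simpa using htr)
    ext m
    have h1 := congrFun this m
    exact mul_left_cancel₀ (hw m).ne' h1
  let W : SFlag n → Set (Fin n → ℝ) := fun f => if f = f0 then Simp n ∪ E else Simp n
  have hWm : ∀ f, MeasurableSet (W f) := by
    intro f; simp only [W]; split_ifs
    · exact (simp_isOpen n).measurableSet.union hEm
    · exact (simp_isOpen n).measurableSet
  have hWpos : ∀ f, ∀ t ∈ W f, ∀ m, 0 < t m := by
    intro f t ht; simp only [W] at ht; split_ifs at ht
    · rcases ht with ht | ht
      · exact ht.1
      · exact hEpos t ht
    · exact ht.1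
  have hsimpQ : ∀ f, ∀ t : Fin n → ℝ, (∀ m, 0 ≤ t m) → ∑ m, t m ≤ 1 → (N f).mulVec t ∈ Q := by
    intro f t ht hs
    rw [hNs]
    exact cvx_sum_mem hQ h0 (fun m => w m • Y (cv f m)) t ht hs (hmem f)
  have hla'Q : (N f0).mulVec la' ∈ Q := by
    have e : la' = (1/2 : ℝ) • la + (1/2 : ℝ) • (fun _ => 1 / (n:ℝ)) := by
      ext m; simp [la']; ring
    rw [e, Matrix.mulVec_add, Matrix.mulVec_smul, Matrix.mulVec_smul]
    refine hQ ?_ ?_ (by norm_num) (by norm_num) (by norm_num)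
    · rw [hNs]; exact hQla
    · refine hsimpQ f0 _ (fun m => by positivity) ?_
      simp; rw [mul_inv_cancel₀ hn0.ne']
  have hWQ : ∀ f, (Matrix.toLin' (N f)) '' (W f) ⊆ Q := by
    rintro f _ ⟨t, ht, rfl⟩
    rw [Matrix.toLin'_apply]
    have hS : ∀ b ∈ Simp n, (N f).mulVec b ∈ Q := fun b hb =>
      hsimpQ f b (fun m => (hb.1 m).le) hb.2.le
    simp only [W] at ht; split_ifs at ht with hf
    · rcases ht with ht | ht
      · exact hS t ht
      · obtain ⟨b, hb, rfl⟩ := hEb t ht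
        rw [Matrix.mulVec_add, Matrix.mulVec_smul, Matrix.mulVec_smul]
        refine hQ (hS b hb) ?_ (by norm_num) (by norm_num) (by norm_num)
        rw [hf]; exact hla'Q
    · exact hS t ht
  have hdisj : Pairwise (Function.onFun Disjoint fun f => (Matrix.toLin' (N f)) '' (W f)) := by
    intro f g hfg
    simp only [Function.onFun]
    rw [Set.disjoint_left]
    rintro _ ⟨t, ht, rfl⟩ ⟨r, hr, hrt⟩
    rw [Matrix.toLin'_apply, Matrix.toLin'_apply, hNv, hNv] at hrt
    exact hfg (flag_disjoint Y η hY hη0 hη f g _ _ (fun m => mul_pos (hw m) (hWpos f t ht m))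
      (fun m => mul_pos (hw m) (hWpos g r hr m)) hrt.symm)
  have hmeas : ∀ f, MeasurableSet ((Matrix.toLin' (N f)) '' (W f)) := fun f =>
    (hWm f).image_of_continuousOn_injOn
      (LinearMap.continuous_of_finiteDimensional _).continuousOn (hinj f).injOn
  have hvol : volume (⋃ f, (Matrix.toLin' (N f)) '' (W f)) ≤ volume Q :=
    measure_mono (Set.iUnion_subset hWQ)
  refine le_trans ?_ hvol
  rw [measure_iUnion hdisj hmeas, tsum_fintype]
  have hP : 0 < ∏ m, w m := Finset.prod_pos fun m _ => hw m
  set V := volume (Simp n) with hV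
  have hWv : ∀ f, ENNReal.ofReal (1 + if f = f0 then (1/2)^n * (k/2) else 0) * V ≤ volume (W f) := by
    intro f
    simp only [W]
    split_ifs with hf
    · rw [measure_union hEd hEm, ENNReal.ofReal_add zero_le_one (by positivity), add_mul]
      simp only [ENNReal.ofReal_one, one_mul]
      gcongr
    · simp [hV]
  calc _ = ENNReal.ofReal (∑ f, (∏ m, w m) * |(PM Y f).det| *
          (1 + if f = f0 then (1/2)^n * (k/2) else 0)) * ENNReal.ofReal (1 / (n.factorial : ℝ)) := by
        rw [← ENNReal.ofReal_mul]
        · congr 2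
          simp only [mul_add, mul_one, Finset.sum_add_distrib, mul_ite, mul_zero]
          rw [Finset.sum_ite_eq' Finset.univ f0, Finset.mul_sum]
          simp
          ring
        · refine Finset.sum_nonneg fun f _ => ?_
          split_ifs <;> positivity
    _ ≤ ENNReal.ofReal (∑ f, (∏ m, w m) * |(PM Y f).det| *
          (1 + if f = f0 then (1/2)^n * (k/2) else 0)) * V := by
        gcongr; exact simp_volume_ge n
    _ = ∑ f, ENNReal.ofReal ((∏ m, w m) * |(PM Y f).det|) *
          (ENNReal.ofReal (1 + if f = f0 then (1/2)^n * (k/2) else 0) * V) := by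
        rw [ENNReal.ofReal_sum_of_nonneg, Finset.sum_mul]
        · refine Finset.sum_congr rfl fun f _ => ?_
          rw [ENNReal.ofReal_mul (by positivity), mul_assoc]
        · intro f _
          split_ifs <;> positivity
    _ ≤ _ := by
        refine Finset.sum_le_sum fun f _ => ?_
        rw [Measure.addHaar_image_linearMap, LinearMap.det_toLin', hNdet, abs_mul, abs_of_pos hP]
        gcongr
        exact hWv f

def NN (n : ℕ) : ℝ := (Fintype.card (SFlag n) : ℝ)

lemma NN_eq (n : ℕ) : NN n = n.factorial * 2 ^ n := by
  simp [NN, SFlag, Fintype.card_perm]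

lemma NN_pos (n : ℕ) : 0 < NN n := by rw [NN_eq]; positivity

def AA {n : ℕ} (Y : (Fin n → ℝ) → (Fin n → ℝ)) : ℝ :=
  (1 / NN n) * ∑ f : SFlag n, ∑ m : Fin n,
    (1 / ((m : ℝ) + 1)) * ∑ i, cv f m i * (Y (cv f m) i - cv f m i)

lemma cvl_cases {n : ℕ} (f : SFlag n) (m : Fin n) : cvl f m = 0 ∨ ∃ m', cvl f m = cv f m' := by
  rcases m with ⟨m, hm⟩
  rcases m with _ | m
  · left; ext i; simp [cvl, Fin.lt_def]
  · right
    refine ⟨⟨m, by omega⟩, ?_⟩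
    ext i
    simp only [cvl, cv, Fin.lt_def, Fin.le_def, Nat.lt_succ_iff]

lemma first_order (n : ℕ) (hn : 1 ≤ n) : ∃ C : ℝ, 0 ≤ C ∧ ∃ c : ℝ, 0 < c ∧ ∃ η₀ : ℝ, 0 < η₀ ∧
    ∀ (Q : Set (Fin n → ℝ)) (hQ : Convex ℝ Q) (h0 : (0 : Fin n → ℝ) ∈ Q)
    (w : Fin n → ℝ) (hw : ∀ m, 0 < w m) (Y : (Fin n → ℝ) → (Fin n → ℝ)) (hY0 : Y 0 = 0)
    (η : ℝ) (hη0 : 0 ≤ η)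
    (hY : ∀ f m i, |Y (cv f m) i - cv f m i| ≤ η) (hη : η ≤ η₀)
    (hmem : ∀ f m, w m • Y (cv f m) ∈ Q)
    (f0 : SFlag n) (la : Fin n → ℝ) (k : ℝ) (hk0 : 0 ≤ k) (hk1 : k ≤ 1)
    (hla : ∀ m, -(1 / (n:ℝ)) ≤ la m) (hsum : 1 + k ≤ ∑ m, la m)
    (hQla : ∑ m, la m • (w m • Y (cv f0 m)) ∈ Q),
    ENNReal.ofReal ((∏ m, w m) * 2 ^ n * (1 + AA Y - C * η ^ 2 + c * k)) ≤ volume Q := by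
  obtain ⟨C, hC, hdet⟩ := det_near_one n
  have hn0 : (0:ℝ) < n := by exact_mod_cast hn
  have hn1 : (1:ℝ) ≤ n := by exact_mod_cast hn
  have hN := NN_pos n
  refine ⟨4 * C, by positivity, (1/2)^n / (4 * NN n), by positivity,
    min (1 / (8 * n)) (1 / (16 * (C + 1))), by positivity, ?_⟩
  intro Q hQ h0 w hw Y hY0 η hη0 hY hη hmem f0 la k hk0 hk1 hla hsum hQla
  have hηa : 8 * n * η ≤ 1 := by
    have := hη.trans (min_le_left _ _)
    rw [le_div_iff₀ (by positivity)] at this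
    linarith
  have hηb : 16 * (C + 1) * η ≤ 1 := by
    have := hη.trans (min_le_right _ _)
    rw [le_div_iff₀ (by positivity)] at this
    linarith
  have hη1 : η ≤ 1 / 8 := by nlinarith
  refine le_trans ?_ (vol_lemma hn Q hQ h0 w hw Y η hη0 hY hηa hmem f0 la k hk0 hk1 hla hsum hQla)
  apply ENNReal.ofReal_le_ofReal
  have hYl : ∀ f m i, |Y (cvl f m) i - cvl f m i| ≤ η := by
    intro f m i
    rcases cvl_cases f m with h | ⟨m', h⟩
    · rw [h, hY0]; simpa using hη0
    · rw [h]; exact hY f m' i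
  have hB : ∀ f l m, |(BM Y f - 1) l m| ≤ 2 * η := by
    intro f l m
    rw [BM_sub_one, abs_mul, abs_sgn, one_mul]
    refine (abs_sub _ _).trans ?_
    linarith [hY f m (f.1 l), hYl f m (f.1 l)]
  have hd : ∀ f, 1 + ∑ i, (BM Y f - 1) i i - C * (2 * η) ^ 2 ≤ |(PM Y f).det| := by
    intro f
    rw [abs_det_PM Y hY0]
    exact (hdet (BM Y f) (2 * η) (by positivity) (by linarith) (hB f)).trans (le_abs_self _)
  have hd0 : 1 / 2 ≤ |(PM Y f0).det| := by
    refine le_trans ?_ (hd f0)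
    have h1 : -(n * (2 * η)) ≤ ∑ i, (BM Y f0 - 1) i i := by
      have := Finset.card_nsmul_le_sum Finset.univ (fun i => (BM Y f0 - 1) i i) (-(2 * η))
        (fun i _ => (abs_le.1 (hB f0 i i)).1)
      simp at this ⊢
      linarith
    have h2 : C * (2 * η)^2 ≤ 1/4 := by
      have : C * η ≤ 1/16 := by nlinarith
      nlinarith
    linarith
  have htr : ∑ f, ∑ i, (BM Y f - 1) i i = NN n * AA Y := by
    simp only [BM_sub_one]
    have := trace_sum (n := n) (fun s => Y s - s)
    simp only [Pi.sub_apply] at this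
    rw [this, AA]
    field_simp
  have hsumd : NN n + NN n * AA Y - NN n * (C * (2 * η) ^ 2) ≤ ∑ f, |(PM Y f).det| := by
    have := Finset.sum_le_sum (fun f (_ : f ∈ (Finset.univ : Finset (SFlag n))) => hd f)
    simp only [Finset.sum_sub_distrib, Finset.sum_add_distrib, htr, Finset.sum_const,
      Finset.card_univ, nsmul_eq_mul, mul_one] at this
    exact this
  have hP : 0 < ∏ m, w m := Finset.prod_pos fun m _ => hw m
  have e1 : (2:ℝ) ^ n = NN n * (1 / n.factorial) := by
    rw [NN_eq]; field_simp
  have e3 : (∏ m, w m) * 2 ^ n * (1 + AA Y - 4 * C * η ^ 2 + (1/2)^n / (4 * NN n) * k) =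
      (∏ m, w m) * (NN n * (1 + AA Y - 4 * C * η ^ 2 + (1/2)^n / (4 * NN n) * k)) *
        (1 / (n.factorial : ℝ)) := by rw [e1]; ring
  rw [e3]
  refine mul_le_mul_of_nonneg_right (mul_le_mul_of_nonneg_left ?_ hP.le) (by positivity)
  have e2 : NN n * (1 + AA Y - 4 * C * η ^ 2 + (1/2)^n / (4 * NN n) * k) =
      NN n + NN n * AA Y - NN n * (C * (2 * η) ^ 2) + (1/2)^n * (k/2) * (1/2) := by
    field_simp; ring
  rw [e2]
  gcongr

def Kp {n : ℕ} (K : Set (Fin n → ℝ)) : Set (Fin n → ℝ) := {ξ | ∀ z ∈ K, ∑ i, z i * ξ i ≤ 1}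

def SV {n : ℕ} (t : Fin n → ℝ) : Prop := ∀ i, t i = 0 ∨ t i = 1 ∨ t i = -1

/-- The hypotheses on the body. -/
structure Bod {n : ℕ} (K : Set (Fin n → ℝ)) (δ : ℝ) : Prop where
  cvx : Convex ℝ K
  cpt : IsCompact K
  sub : ∀ z ∈ K, ∀ i, |z i| ≤ 1
  sup : ∀ z : Fin n → ℝ, (∀ i, |z i| ≤ 1 - δ) → z ∈ K
  pos : 0 < δ
  half : δ ≤ 1 / 2

lemma first_var {ι : Type*} (S : Finset ι) (r : ι → ℝ)
    (h : ∃ s₀ > 0, ∀ s, 0 < s → s ≤ s₀ → ∏ i ∈ S, (1 + s * r i) ≤ 1) : ∑ i ∈ S, r i ≤ 0 := by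
  obtain ⟨s₀, hs₀, h⟩ := h
  by_contra hc
  push Not at hc
  set D := ∑ i ∈ S, r i with hD
  obtain ⟨R, hR1, hR⟩ : ∃ R : ℝ, 1 ≤ R ∧ ∀ i ∈ S, |r i| ≤ R := by
    refine ⟨1 + ∑ i ∈ S, |r i|, ?_, fun i hi => ?_⟩
    · have : 0 ≤ ∑ i ∈ S, |r i| := Finset.sum_nonneg fun _ _ => abs_nonneg _
      linarith
    · have := Finset.single_le_sum (f := fun i => |r i|) (fun _ _ => abs_nonneg _) hi
      linarith
  have hC : (0:ℝ) < 4 ^ S.card := by positivity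
  let s := min s₀ (min (1 / R) (D / (2 * 4 ^ S.card * R ^ 2)))
  have hs : 0 < s := by positivity
  have hsR : s * R ≤ 1 := by
    have : s ≤ 1 / R := (min_le_right _ _).trans (min_le_left _ _)
    rwa [le_div_iff₀ (by positivity)] at this
  have hsD : s * (2 * 4 ^ S.card * R ^ 2) ≤ D := by
    have : s ≤ D / (2 * 4 ^ S.card * R ^ 2) := (min_le_right _ _).trans (min_le_right _ _)
    rwa [le_div_iff₀ (by positivity)] at this
  have h1 := prod_one_add_bound S (fun i => s * r i) (s * R) (by positivity) hsR (fun i hi => by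
    rw [abs_mul, abs_of_pos hs]
    exact mul_le_mul_of_nonneg_left (hR i hi) hs.le)
  have h2 := h s hs (min_le_left _ _)
  rw [← Finset.mul_sum, ← hD] at h1
  have h3 := (abs_le.1 h1).1
  have h4 : s * D ≤ 4 ^ S.card * (s * R) ^ 2 := by linarith
  have h5 : D ≤ 4 ^ S.card * R ^ 2 * s := by
    have : s * D ≤ s * (4 ^ S.card * R ^ 2 * s) := by nlinarith
    exact le_of_mul_le_mul_left this hs
  nlinarith

lemma zero_nhds {n : ℕ} {K : Set (Fin n → ℝ)} {δ : ℝ} (hK : Bod K δ) : K ∈ nhds (0 : Fin n → ℝ) := by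
  have h := hK.half
  refine Filter.mem_of_superset (Metric.ball_mem_nhds 0 (show (0:ℝ) < 1/2 by norm_num)) ?_
  intro z hz
  apply hK.sup
  intro i
  rw [mem_ball_zero_iff] at hz
  have := norm_le_pi_norm z i
  rw [Real.norm_eq_abs] at this
  linarith

lemma hb_ext {n : ℕ} {K : Set (Fin n → ℝ)} {δ : ℝ} (hK : Bod K δ) (S : Finset (Fin n))
    (ξ : Fin n → ℝ) (h : ∀ z ∈ K, (∀ i, i ∉ S → z i = 0) → ∑ i, z i * ξ i ≤ 1) :
    ∃ y ∈ Kp K, ∀ i ∈ S, y i = ξ i := by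
  have hab : Absorbent ℝ K := absorbent_nhds_zero (zero_nhds hK)
  let V : Submodule ℝ (Fin n → ℝ) :=
    { carrier := {z | ∀ i, i ∉ S → z i = 0}
      add_mem' := fun {a b} ha hb i hi => by simp [ha i hi, hb i hi]
      zero_mem' := fun i _ => rfl
      smul_mem' := fun c a ha i hi => by simp [ha i hi] }
  let L : (Fin n → ℝ) →ₗ[ℝ] ℝ :=
    { toFun := fun z => ∑ i, z i * ξ i
      map_add' := fun a b => by simp [add_mul, Finset.sum_add_distrib]
      map_smul' := fun c a => by simp [Finset.mul_sum, mul_assoc] }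
  obtain ⟨g, hg1, hg2⟩ := exists_extension_of_le_sublinear (LinearPMap.mk V (L.domRestrict V))
    (gauge K) (fun c hc x => by rw [gauge_smul_of_nonneg hc.le, smul_eq_mul])
    (gauge_add_le hK.cvx hab) (by
      rintro ⟨x, hx⟩
      change L x ≤ gauge K x
      refine le_of_forall_gt_imp_ge_of_dense fun a ha => ?_
      obtain ⟨b, hb, hba, z, hz, hzx⟩ := exists_lt_of_gauge_lt hab ha
      have hzx : b • z = x := hzx
      rw [← hzx, map_smul, smul_eq_mul]
      have hzV : ∀ i, i ∉ S → z i = 0 := by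
        intro i hi
        have h1 : b * z i = x i := by rw [← hzx]; rfl
        rw [hx i hi] at h1
        exact (mul_eq_zero.1 h1).resolve_left hb.ne'
      have := h z hz hzV
      change b * ∑ i, z i * ξ i ≤ a
      nlinarith)
  refine ⟨fun i => g (Pi.single i 1), ?_, ?_⟩
  · intro z hz
    have h1 := hg2 z
    have h2 := gauge_le_one_of_mem hz
    rw [LinearMap.pi_apply_eq_sum_univ g z] at h1
    simp only [smul_eq_mul] at h1
    refine le_trans (le_of_eq ?_) (h1.trans h2)
    refine Finset.sum_congr rfl fun i _ => ?_
    have e : (Pi.single i 1 : Fin n → ℝ) = fun j => if i = j then 1 else 0 := by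
      ext j; simp [Pi.single_apply, eq_comm]
    rw [← e]
  · intro i hi
    have h1 := hg1 ⟨Pi.single i 1, fun j hj => by
      rw [Pi.single_eq_of_ne]; rintro rfl; exact hj hi⟩
    change g (Pi.single i 1) = ξ i
    rw [h1]
    change ∑ j, (Pi.single i (1:ℝ) : Fin n → ℝ) j * ξ j = ξ i
    simp [Pi.single_apply]

def spt {n : ℕ} (t : Fin n → ℝ) : Finset (Fin n) := Finset.univ.filter fun i => t i ≠ 0

structure PtP {n : ℕ} (K : Set (Fin n → ℝ)) (δ : ℝ) (t x y : Fin n → ℝ) : Prop where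
  memx : x ∈ K
  memy : (1 / ((spt t).card : ℝ)) • y ∈ Kp K
  zero : ∀ i, t i = 0 → x i = 0
  bd : ∀ i, t i ≠ 0 → 1 - n * δ ≤ t i * x i ∧ t i * x i ≤ 1
  inv : ∀ i, t i ≠ 0 → y i * x i = 1
  one : (spt t).card = 1 → x = t ∧ y = t

lemma point_exists {n : ℕ} {K : Set (Fin n → ℝ)} {δ : ℝ} (hK : Bod K δ) (t : Fin n → ℝ) (ht : SV t)
    (hS : (spt t).Nonempty) :
    ∃ x y, x ∈ K ∧ (1 / ((spt t).card : ℝ)) • y ∈ Kp K ∧ (∀ i, t i = 0 → x i = 0) ∧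
      (∀ i, t i ≠ 0 → 1 - n * δ ≤ t i * x i ∧ t i * x i ≤ 1) ∧ (∀ i, t i ≠ 0 → y i * x i = 1) := by
  set S := spt t with hSdef
  have hmS : ∀ i, i ∈ S ↔ t i ≠ 0 := fun i => by simp [hSdef, spt]
  have htt : ∀ i ∈ S, t i * t i = 1 := by
    intro i hi
    rcases ht i with h | h | h
    · exact absurd h ((hmS i).1 hi)
    · simp [h]
    · simp [h]
  have habs : ∀ i ∈ S, |t i| = 1 := by
    intro i hi
    rcases ht i with h | h | h
    · exact absurd h ((hmS i).1 hi)
    · simp [h]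
    · simp [h]
  have hle : ∀ z ∈ K, ∀ i ∈ S, t i * z i ≤ 1 := by
    intro z hz i hi
    calc t i * z i ≤ |t i * z i| := le_abs_self _
      _ = |z i| := by rw [abs_mul, habs i hi, one_mul]
      _ ≤ 1 := hK.sub z hz i
  let L : Set (Fin n → ℝ) := {z | (∀ i, t i = 0 → z i = 0) ∧ ∀ i ∈ S, 0 ≤ t i * z i}
  have hLc : IsClosed L := by
    have : L = (⋂ i, {z : Fin n → ℝ | t i = 0 → z i = 0}) ∩ ⋂ i ∈ S, {z | 0 ≤ t i * z i} := by
      ext z; simp [L]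
    rw [this]
    refine IsClosed.inter (isClosed_iInter fun i => ?_) (isClosed_biInter fun i _ => ?_)
    · by_cases h : t i = 0
      · simp only [h, true_imp_iff]
        exact isClosed_eq (continuous_apply i) continuous_const
      · simp [h]
    · exact isClosed_le continuous_const (by fun_prop)
  have hδ := hK.pos
  have hδ2 := hK.half
  have h1δ : 0 < 1 - δ := by linarith
  have hz0 : (1 - δ) • t ∈ K ∩ L := by
    refine ⟨hK.sup _ fun i => ?_, fun i hi => by simp [hi], fun i hi => ?_⟩
    · simp only [Pi.smul_apply, smul_eq_mul, abs_mul, abs_of_pos h1δ]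
      rcases ht i with h | h | h <;> simp [h] <;> linarith
    · have := htt i hi
      simp only [Pi.smul_apply, smul_eq_mul]
      nlinarith
  obtain ⟨x, hx, hmax⟩ := (hK.cpt.inter_right hLc).exists_isMaxOn ⟨_, hz0⟩
    (f := fun z => ∏ i ∈ S, t i * z i) (by fun_prop)
  have hprod : (1 - δ) ^ S.card ≤ ∏ i ∈ S, t i * x i := by
    have := hmax hz0
    simp only [Set.mem_ofPred_eq, Pi.smul_apply, smul_eq_mul] at this
    refine le_trans (le_of_eq ?_) this
    rw [← Finset.prod_const]
    refine Finset.prod_congr rfl fun i hi => ?_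
    have := htt i hi
    linear_combination (-(1 - δ)) * this
  have hcard : S.card ≤ n := by
    simpa using Finset.card_le_univ S
  have hbern : 1 - n * δ ≤ (1 - δ) ^ S.card := by
    have h1 := one_add_mul_le_pow (a := -δ) (by linarith) S.card
    have h2 : (S.card : ℝ) ≤ n := by exact_mod_cast hcard
    have h3 : (1 + -δ) = 1 - δ := by ring
    rw [h3] at h1
    nlinarith
  have hfac : ∀ i ∈ S, (1 - δ) ^ S.card ≤ t i * x i := by
    intro i hi
    refine hprod.trans ?_
    rw [← Finset.mul_prod_erase S _ hi]
    have h1 : ∏ j ∈ S.erase i, t j * x j ≤ 1 :=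
      Finset.prod_le_one (fun j hj => hx.2.2 j (Finset.mem_of_mem_erase hj))
        (fun j hj => hle x hx.1 j (Finset.mem_of_mem_erase hj))
    have h2 := hx.2.2 i hi
    nlinarith
  have hfpos : ∀ i ∈ S, 0 < t i * x i := fun i hi => lt_of_lt_of_le (by positivity) (hfac i hi)
  have hxne : ∀ i ∈ S, x i ≠ 0 := fun i hi h => by
    have := hfpos i hi; rw [h] at this; simp at this
  have hcp : (0:ℝ) < S.card := by exact_mod_cast hS.card_pos
  -- variation
  have hvar : ∀ z ∈ K, (∀ i, i ∉ S → z i = 0) → ∑ i ∈ S, z i / x i ≤ S.card := by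
    intro z hz hz0
    have key : ∑ i ∈ S, (z i / x i - 1) ≤ 0 := by
      apply first_var
      set s₀ := (1 - δ) ^ S.card / 2 with hs₀
      have hq : (1 - δ) ^ S.card ≤ 1 := pow_le_one₀ h1δ.le (by linarith)
      have hs₀p : 0 < s₀ := by positivity
      refine ⟨s₀, hs₀p, fun s hs hss => ?_⟩
      have hs1 : s ≤ 1 / 2 := by linarith
      have hmem : (1 - s) • x + s • z ∈ K ∩ L := by
        refine ⟨hK.cvx hx.1 hz (by linarith) hs.le (by ring), fun i hi => ?_, fun i hi => ?_⟩
        · have h1 := hx.2.1 i hi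
          have h2 := hz0 i (by rw [hmS]; simpa using hi)
          simp [h1, h2]
        · simp only [Pi.add_apply, Pi.smul_apply, smul_eq_mul]
          have h1 := hfac i hi
          have h2 : -1 ≤ t i * z i := by
            have : |t i * z i| ≤ 1 := by
              rw [abs_mul, habs i hi, one_mul]; exact hK.sub z hz i
            exact (abs_le.1 this).1
          have h3 : s ≤ (1 - s) * (t i * x i) := by nlinarith
          nlinarith
      have hm := hmax hmem
      simp only [Set.mem_ofPred_eq, Pi.add_apply, Pi.smul_apply, smul_eq_mul] at hm
      have he : ∏ i ∈ S, t i * ((1 - s) * x i + s * z i) =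
          (∏ i ∈ S, t i * x i) * ∏ i ∈ S, (1 + s * (z i / x i - 1)) := by
        rw [← Finset.prod_mul_distrib]
        refine Finset.prod_congr rfl fun i hi => ?_
        have := hxne i hi
        field_simp
        ring
      rw [he] at hm
      have hpp : 0 < ∏ i ∈ S, t i * x i := Finset.prod_pos hfpos
      by_contra hc
      push Not at hc
      nlinarith
    rw [Finset.sum_sub_distrib] at key
    simp at key
    exact key
  obtain ⟨y, hy1, hy2⟩ := hb_ext hK S (fun i => if i ∈ S then 1 / (S.card * x i) else 0) (by
    intro z hz hz0
    have h1 := hvar z hz hz0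
    have h2 : ∑ i, z i * (if i ∈ S then 1 / (S.card * x i) else 0) = (∑ i ∈ S, z i / x i) / S.card := by
      simp only [mul_ite, mul_zero]
      rw [← Finset.sum_filter, Finset.filter_mem_eq_inter, Finset.univ_inter, Finset.sum_div]
      refine Finset.sum_congr rfl fun i hi => ?_
      have := hxne i hi
      field_simp
    rw [h2, div_le_one hcp]
    exact h1)
  refine ⟨x, (S.card : ℝ) • y, hx.1, ?_, hx.2.1, ?_, ?_⟩
  · rw [smul_smul, one_div, inv_mul_cancel₀ hcp.ne', one_smul]
    exact hy1
  · intro i hi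
    rw [← hmS] at hi
    exact ⟨hbern.trans (hfac i hi), hle x hx.1 i hi⟩
  · intro i hi
    rw [← hmS] at hi
    have := hxne i hi
    simp only [Pi.smul_apply, smul_eq_mul, hy2 i hi, if_pos hi]
    field_simp

lemma ptp_exists {n : ℕ} {K : Set (Fin n → ℝ)} {δ : ℝ} (hK : Bod K δ)
    (hunit : ∀ t, SV t → (spt t).card = 1 → t ∈ K) (t : Fin n → ℝ) (ht : SV t)
    (hS : (spt t).Nonempty) : ∃ x y, PtP K δ t x y := by
  have hδ := hK.pos
  by_cases h1 : (spt t).card = 1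
  · have htt : ∀ i, t i ≠ 0 → t i * t i = 1 := by
      intro i hi
      rcases ht i with h | h | h
      · exact absurd h hi
      · simp [h]
      · simp [h]
    refine ⟨t, t, hunit t ht h1, ?_, fun i hi => hi, fun i hi => ?_, htt, fun _ => ⟨rfl, rfl⟩⟩
    · rw [h1]
      simp only [Nat.cast_one, div_one, one_smul]
      intro z hz
      obtain ⟨j, hj⟩ := Finset.card_eq_one.1 h1
      have hz0 : ∀ i, i ≠ j → t i = 0 := by
        intro i hi
        by_contra h
        have : i ∈ spt t := by simp [spt, h]
        rw [hj] at this
        simp at this; exact hi this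
      rw [Finset.sum_eq_single j (fun i _ hi => by simp [hz0 i hi]) (by simp)]
      have h2 := abs_le.1 (hK.sub z hz j)
      rcases ht j with h | h | h <;> rw [h] <;> linarith [h2.1, h2.2]
    · rw [htt i hi]
      have : (0:ℝ) ≤ n * δ := by positivity
      constructor <;> linarith
  · obtain ⟨x, y, a, b, c, d, e⟩ := point_exists hK t ht hS
    exact ⟨x, y, a, b, c, d, e, fun h => absurd h h1⟩

lemma l1_bound {n : ℕ} {K : Set (Fin n → ℝ)} {δ : ℝ} (hK : Bod K δ) (y : Fin n → ℝ) (hy : y ∈ Kp K) :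
    ∑ i, |y i| ≤ 1 + 2 * δ := by
  have hδ := hK.pos
  have hδ2 := hK.half
  choose u hu using fun i => exists_sgn (y i)
  have h1 := hy (fun i => (1 - δ) * sgn (u i)) (hK.sup _ fun i => by
    rw [abs_mul, abs_sgn, mul_one, abs_of_nonneg (by linarith)])
  simp only [mul_assoc, hu] at h1
  rw [← Finset.mul_sum] at h1
  have h0 : 0 ≤ ∑ i, |y i| := Finset.sum_nonneg fun _ _ => abs_nonneg _
  by_contra h
  push Not at h
  nlinarith

lemma sv_mul {n : ℕ} {t : Fin n → ℝ} (ht : SV t) (i : Fin n) (hi : t i ≠ 0) :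
    t i * t i = 1 ∧ |t i| = 1 := by
  rcases ht i with h | h | h
  · exact absurd h hi
  · simp [h]
  · simp [h]

lemma PtP.l1 {n : ℕ} {K : Set (Fin n → ℝ)} {δ : ℝ} (hK : Bod K δ) {t x y : Fin n → ℝ}
    (hS : (spt t).Nonempty) (h : PtP K δ t x y) :
    ∑ i, |y i| ≤ (spt t).card * (1 + 2 * δ) := by
  have hc : (0:ℝ) < (spt t).card := by exact_mod_cast hS.card_pos
  have h1 := l1_bound hK _ h.memy
  simp only [Pi.smul_apply, smul_eq_mul, abs_mul, ← Finset.mul_sum] at h1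
  rw [abs_of_pos (by positivity), one_div, inv_mul_le_iff₀ hc] at h1
  exact h1

lemma spt_card_le {n : ℕ} (t : Fin n → ℝ) : ((spt t).card : ℝ) ≤ n := by
  have : (spt t).card ≤ n := by simpa using Finset.card_le_univ (spt t)
  exact_mod_cast this

lemma PtP.pos {n : ℕ} {K : Set (Fin n → ℝ)} {δ : ℝ} (hnδ : n * δ ≤ 1 / 2)
    {t x y : Fin n → ℝ} (h : PtP K δ t x y) (i : Fin n) (hi : t i ≠ 0) : 1/2 ≤ t i * x i := by
  have := (h.bd i hi).1; linarith

lemma PtP.ty {n : ℕ} {K : Set (Fin n → ℝ)} {δ : ℝ}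
    {t x y : Fin n → ℝ} (ht : SV t) (h : PtP K δ t x y) (i : Fin n) (hi : t i ≠ 0) :
    (t i * y i) * (t i * x i) = 1 := by
  have h1 := (sv_mul ht i hi).1
  have h2 := h.inv i hi
  linear_combination (y i * x i) * h1 + h2

lemma PtP.dx {n : ℕ} {K : Set (Fin n → ℝ)} {δ : ℝ} (hK : Bod K δ) 
    {t x y : Fin n → ℝ} (ht : SV t) (h : PtP K δ t x y) (i : Fin n) : |x i - t i| ≤ n * δ := by
  have hδ := hK.pos
  by_cases hi : t i = 0
  · rw [h.zero i hi, hi]; simp; positivity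
  · have h1 := h.bd i hi
    have h2 := sv_mul ht i hi
    have h3 : |x i - t i| = |t i * x i - 1| := by
      rw [← h2.1, ← mul_sub, abs_mul, h2.2, one_mul]
    rw [h3, abs_le]
    have : (0:ℝ) ≤ n * δ := by positivity
    constructor <;> linarith [h1.1, h1.2]

lemma PtP.ty_bd {n : ℕ} {K : Set (Fin n → ℝ)} {δ : ℝ} (hK : Bod K δ) (hnδ : n * δ ≤ 1 / 2)
    {t x y : Fin n → ℝ} (ht : SV t) (h : PtP K δ t x y) (i : Fin n) (hi : t i ≠ 0) :
    1 ≤ t i * y i ∧ t i * y i ≤ 1 + 2 * (n * δ) := by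
  have h1 := PtP.ty ht h i hi
  have h2 := h.bd i hi
  have h3 := h.pos hnδ i hi
  set a := t i * x i
  set b := t i * y i
  have hb : 0 < b := by
    by_contra hb; push Not at hb; nlinarith
  constructor
  · nlinarith
  · by_contra hc
    push Not at hc
    have hδ := hK.pos
    have : (0:ℝ) ≤ n * δ := by positivity
    nlinarith

lemma PtP.dy {n : ℕ} {K : Set (Fin n → ℝ)} {δ : ℝ} (hK : Bod K δ) (hnδ : n * δ ≤ 1 / 2)
    {t x y : Fin n → ℝ} (ht : SV t) (hS : (spt t).Nonempty) (h : PtP K δ t x y) (i : Fin n) :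
    |y i - t i| ≤ 2 * (n * δ) := by
  have hδ := hK.pos
  by_cases hi : t i = 0
  · rw [hi, sub_zero]
    have h1 := h.l1 hK hS
    have h2 : ∀ j ∈ spt t, 1 ≤ |y j| := by
      intro j hj
      have hj' : t j ≠ 0 := by simpa [spt] using hj
      have h3 := (h.ty_bd hK hnδ ht j hj').1
      have h4 : |t j * y j| = |y j| := by rw [abs_mul, (sv_mul ht j hj').2, one_mul]
      rw [← h4]; exact h3.trans (le_abs_self _)
    have h3 : ((spt t).card : ℝ) ≤ ∑ j ∈ spt t, |y j| := by
      have := Finset.card_nsmul_le_sum (spt t) (fun j => |y j|) 1 h2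
      simpa using this
    have h4 : ∑ j ∈ spt t, |y j| + |y i| ≤ ∑ j, |y j| := by
      have hni : i ∉ spt t := by simp [spt, hi]
      rw [add_comm, ← Finset.sum_insert hni (f := fun j => |y j|)]
      exact Finset.sum_le_sum_of_subset_of_nonneg (Finset.subset_univ _) fun _ _ _ => abs_nonneg _
    have h5 := spt_card_le t
    nlinarith
  · have h1 := h.ty_bd hK hnδ ht i hi
    have h2 := sv_mul ht i hi
    have h3 : |y i - t i| = |t i * y i - 1| := by
      rw [← h2.1, ← mul_sub, abs_mul, h2.2, one_mul]
    rw [h3, abs_le]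
    have : (0:ℝ) ≤ n * δ := by positivity
    constructor <;> linarith [h1.1, h1.2]

lemma PtP.sum_nonneg {n : ℕ} {K : Set (Fin n → ℝ)} {δ : ℝ} (hnδ : n * δ ≤ 1 / 2)
    {t x y : Fin n → ℝ} (ht : SV t) (h : PtP K δ t x y) :
    0 ≤ ∑ i, t i * (x i - t i) + ∑ i, t i * (y i - t i) := by
  rw [← Finset.sum_add_distrib]
  refine Finset.sum_nonneg fun i _ => ?_
  by_cases hi : t i = 0
  · simp [hi]
  · have h1 := PtP.ty ht h i hi
    have h2 := h.pos hnδ i hi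
    have h3 := (sv_mul ht i hi).1
    have : t i * (x i - t i) + t i * (y i - t i) = t i * x i + t i * y i - 2 := by
      linear_combination (-2) * h3
    rw [this]
    set a := t i * x i
    set b := t i * y i
    have hb : 0 < b := by
      by_contra hb; push Not at hb; nlinarith
    nlinarith [sq_nonneg (a - b)]

lemma sgn_ne_zero (u : ℤˣ) : sgn u ≠ 0 := by rcases sgn_cases u with h | h <;> simp [h]

lemma cv_SV {n : ℕ} (f : SFlag n) (m : Fin n) : SV (cv f m) := by
  intro i
  simp only [cv]
  split_ifs
  · exact Or.inr (sgn_cases _)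
  · exact Or.inl rfl

lemma cv_card {n : ℕ} (f : SFlag n) (m : Fin n) : (spt (cv f m)).card = m + 1 := by
  have : spt (cv f m) = (Finset.Iic m).map f.1.toEmbedding := by
    ext i
    simp only [spt, cv, Finset.mem_filter, Finset.mem_univ, true_and, ne_eq, ite_eq_right_iff,
      sgn_ne_zero, imp_false, not_not, Finset.mem_map, Finset.mem_Iic, Equiv.coe_toEmbedding]
    constructor
    · intro h; exact ⟨_, h, by simp⟩
    · rintro ⟨a, h, rfl⟩; simpa using h
  rw [this, Finset.card_map, Fin.card_Iic]

lemma cv_ne {n : ℕ} (f : SFlag n) (m : Fin n) : (spt (cv f m)).Nonempty := by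
  rw [← Finset.card_pos, cv_card]; omega

lemma choose_XY {n : ℕ} {K : Set (Fin n → ℝ)} {δ : ℝ} (hK : Bod K δ)
    (hunit : ∀ t, SV t → (spt t).card = 1 → t ∈ K) :
    ∃ X Y : (Fin n → ℝ) → (Fin n → ℝ), X 0 = 0 ∧ Y 0 = 0 ∧
      ∀ f m, PtP K δ (cv f m) (X (cv f m)) (Y (cv f m)) := by
  classical
  choose! X Y h using ptp_exists hK hunit
  have hs : ∀ f m, cv (n := n) f m ≠ 0 := by
    intro f m h0
    have := cv_ne f m
    rw [h0] at this
    simp [spt] at this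
  refine ⟨fun t => if t = 0 then 0 else X t, fun t => if t = 0 then 0 else Y t, by simp, by simp, ?_⟩
  intro f m
  simp only [hs, if_false]
  exact h _ (cv_SV f m) (cv_ne f m)

lemma AA_nonneg {n : ℕ} {K : Set (Fin n → ℝ)} {δ : ℝ} (hnδ : n * δ ≤ 1 / 2)
    (X Y : (Fin n → ℝ) → (Fin n → ℝ)) (h : ∀ f m, PtP K δ (cv f m) (X (cv f m)) (Y (cv f m))) :
    0 ≤ AA X + AA Y := by
  rw [AA, AA, ← mul_add, ← Finset.sum_add_distrib]
  have hN := NN_pos n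
  refine mul_nonneg (by positivity) (Finset.sum_nonneg fun f _ => ?_)
  rw [← Finset.sum_add_distrib]
  refine Finset.sum_nonneg fun m _ => ?_
  rw [← mul_add]
  exact mul_nonneg (by positivity) ((h f m).sum_nonneg hnδ (cv_SV f m))

lemma AA_bound {n : ℕ} (Y : (Fin n → ℝ) → (Fin n → ℝ)) (η : ℝ) 
    (hY : ∀ f m i, |Y (cv f m) i - cv f m i| ≤ η) : |AA Y| ≤ n * n * η := by
  have hN := NN_pos n
  rw [AA, abs_mul, abs_of_pos (by positivity), one_div, inv_mul_le_iff₀ hN]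
  refine (Finset.abs_sum_le_sum_abs _ _).trans ?_
  refine (Finset.sum_le_card_nsmul _ _ (n * n * η) fun f _ => ?_).trans (le_of_eq ?_)
  · refine (Finset.abs_sum_le_sum_abs _ _).trans ?_
    refine (Finset.sum_le_card_nsmul _ _ (n * η) fun m _ => ?_).trans (le_of_eq ?_)
    · have h1 : |∑ i, cv f m i * (Y (cv f m) i - cv f m i)| ≤ n * η := by
        refine (Finset.abs_sum_le_sum_abs _ _).trans ?_
        refine (Finset.sum_le_card_nsmul _ _ η fun i _ => ?_).trans (le_of_eq ?_)
        · rw [abs_mul]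
          have h2 : |cv f m i| ≤ 1 := by
            simp only [cv]; split_ifs <;> simp [abs_sgn]
          calc _ ≤ 1 * |Y (cv f m) i - cv f m i| := by gcongr
            _ ≤ _ := by rw [one_mul]; exact hY f m i
        · simp
      rw [abs_mul, abs_of_pos (by positivity)]
      have h3 : 1 / ((m:ℝ) + 1) ≤ 1 := by
        rw [div_le_one (by positivity)]
        have : (0:ℝ) ≤ m := by positivity
        linarith
      calc _ ≤ 1 * |∑ i, cv f m i * (Y (cv f m) i - cv f m i)| := by gcongr
        _ ≤ _ := by rw [one_mul]; exact h1
    · simp; ring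
  · simp [NN]

def sv {n : ℕ} (ε : Fin n → ℤˣ) : Fin n → ℝ := fun i => sgn (ε i)

lemma vertex_exists {n : ℕ} {K : Set (Fin n → ℝ)} (hK : Convex ℝ K) (a : ℝ) (ha : 0 ≤ a)
    (z : Fin n → ℝ) (hz : ∀ i, |z i| ≤ a) (hzK : z ∉ K) : ∃ ε : Fin n → ℤˣ, a • sv ε ∉ K := by
  by_contra hcon
  push Not at hcon
  apply hzK
  have h1 : z ∈ convexHull ℝ (Set.pi Set.univ (fun _ : Fin n => ({-a, a} : Set ℝ))) := by
    rw [convexHull_pi]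
    intro i _
    rw [convexHull_pair, segment_eq_Icc (by linarith)]
    exact abs_le.1 (hz i)
  refine convexHull_min ?_ hK h1
  intro q hq
  have h2 : ∀ i, ∃ u : ℤˣ, q i = a * sgn u := by
    intro i
    rcases hq i trivial with h | h
    · exact ⟨-1, by simp [h, sgn]⟩
    · exact ⟨1, by simp at h; simp [h, sgn]⟩
  choose ε hε using h2
  have : q = a • sv ε := by ext i; simp [hε, sv]
  rw [this]; exact hcon ε

lemma vertex_gap {n : ℕ} (hn : 1 ≤ n) {K : Set (Fin n → ℝ)} {δ : ℝ} (hK : Bod K δ)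
    (ε : Fin n → ℤˣ) (hε : (1 - δ / 2) • sv ε ∉ K) (x : Fin n → ℝ) (hx : x ∈ K) :
    ∃ j, δ / (3 * n) ≤ 1 - sgn (ε j) * x j := by
  by_contra hcon
  push Not at hcon
  have hn0 : (0:ℝ) < n := by exact_mod_cast hn
  have hn1 : (1:ℝ) ≤ n := by exact_mod_cast hn
  have hδ := hK.pos
  have hδ2 := hK.half
  apply hε
  set a := δ / 3 with ha
  have hap : 0 < a := by positivity
  have hw : ∀ i, 0 ≤ 1 - sgn (ε i) * x i ∧ 1 - sgn (ε i) * x i ≤ a := by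
    intro i
    constructor
    · have h1 : |sgn (ε i) * x i| ≤ 1 := by rw [abs_mul, abs_sgn, one_mul]; exact hK.sub x hx i
      linarith [(abs_le.1 h1).2]
    · have h1 := hcon i
      have h2 : δ / (3 * n) ≤ a := by
        rw [ha]; gcongr; linarith
      linarith
  let q : Fin n → ℝ := fun i => sgn (ε i) * (-(1/2) + (1 - a) * ((1 - sgn (ε i) * x i) / a))
  have hq : q ∈ K := by
    apply hK.sup
    intro i
    simp only [q]
    rw [abs_mul, abs_sgn, one_mul]
    obtain ⟨h1, h2⟩ := hw i
    have h3 : (1 - sgn (ε i) * x i) / a ≤ 1 := by rw [div_le_one hap]; exact h2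
    have h4 : 0 ≤ (1 - sgn (ε i) * x i) / a := by positivity
    have h5 : 0 < 1 - a := by linarith
    rw [abs_le]
    constructor <;> nlinarith
  have he : (1 - δ / 2) • sv ε = (1 - a) • x + a • q := by
    ext i
    simp only [Pi.smul_apply, Pi.add_apply, smul_eq_mul, q, sv]
    have h6 := sgn_mul_self (ε i)
    have h7 : δ = 3 * a := by rw [ha]; ring
    rw [h7]
    field_simp
    linear_combination (2 * (1-a)) * x i * h6
  rw [he]
  exact hK.cvx hx hq (by linarith) hap.le (by ring)

lemma small_pow {n : ℕ} (hn : 1 ≤ n) {δ : ℝ} (hδ : 0 < δ) (h : 10000 * (n:ℝ)^6 * δ ≤ 1) (k : ℕ)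
    (hk : k ≤ 6) : (n:ℝ)^k * δ ≤ 1 / 10000 := by
  have hn1 : (1:ℝ) ≤ n := by exact_mod_cast hn
  have h1 : (n:ℝ)^k ≤ (n:ℝ)^6 := pow_le_pow_right₀ hn1 hk
  nlinarith

lemma cv_last {n : ℕ} (f : SFlag n) (l : Fin n) (hl : ∀ m, m ≤ l) : cv f l = sv f.2 := by
  ext i; simp [cv, hl, sv]

lemma gain_K {n : ℕ} (hn : 2 ≤ n) {K : Set (Fin n → ℝ)} {δ : ℝ} (hK : Bod K δ)
    (hs : 10000 * (n:ℝ)^6 * δ ≤ 1)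
    (X Y : (Fin n → ℝ) → (Fin n → ℝ)) (h : ∀ f m, PtP K δ (cv f m) (X (cv f m)) (Y (cv f m)))
    (ε : Fin n → ℤˣ) (j0 : Fin n) (hj : δ / (3 * n) ≤ 1 - sgn (ε j0) * X (sv ε) j0)
    (hp : (1 - δ / (12 * n) - 2 * n ^ 2 * δ) • sv ε + (2 * n ^ 2 * δ) • (Pi.single j0 (sgn (ε j0)))
      ∈ K) :
    ∃ (f0 : SFlag n) (la : Fin n → ℝ), (∀ m, -(1 / (n:ℝ)) ≤ la m) ∧
      1 + δ / (48 * n) ≤ ∑ m, la m ∧ ∑ m, la m • X (cv f0 m) ∈ K := by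
  have hδ := hK.pos
  have hn0 : (0:ℝ) < n := by positivity
  have hn1 : (1:ℝ) ≤ n := by exact_mod_cast (by omega : 1 ≤ n)
  have p1 := small_pow (by omega) hδ hs 1 (by norm_num)
  have p2 := small_pow (by omega) hδ hs 2 (by norm_num)
  have p3 := small_pow (by omega) hδ hs 3 (by norm_num)
  have p4 := small_pow (by omega) hδ hs 4 (by norm_num)
  rw [pow_one] at p1
  let z : Fin n := ⟨0, by omega⟩
  let l : Fin n := ⟨n - 1, by omega⟩
  have hl : ∀ m, m ≤ l := fun m => by rw [Fin.le_def]; have := m.2; simp only [l]; omega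
  let f0 : SFlag n := (Equiv.swap z j0, ε)
  have hcl : cv f0 l = sv ε := cv_last f0 l hl
  have hsymm : f0.1.symm j0 = z := by simp [f0]
  have hz : ∀ m : Fin n, z ≤ m := fun m => by rw [Fin.le_def]; simp [z]
  have hcj : ∀ m, cv f0 m j0 = sgn (ε j0) := by
    intro m; simp only [cv, hsymm, hz, if_true]; rfl
  have hcz : cv f0 z = Pi.single j0 (sgn (ε j0)) := by
    ext i
    rw [Pi.single_apply]
    simp only [cv]
    have : f0.1.symm i ≤ z ↔ i = j0 := by
      constructor
      · intro h1
        have h2 : f0.1.symm i = f0.1.symm j0 := by rw [hsymm]; exact le_antisymm h1 (hz _)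
        exact f0.1.symm.injective h2
      · rintro rfl; rw [hsymm]
    simp only [this]
    split_ifs with hi
    · rw [hi]
    · rfl
  have hXz : X (cv f0 z) = cv f0 z := ((h f0 z).one (by rw [cv_card])).1
  have hdx : ∀ m i, |X (cv f0 m) i - cv f0 m i| ≤ n * δ := fun m i =>
    (h f0 m).dx hK (cv_SV f0 m) i
  set u : Fin n → ℝ := sv ε - X (sv ε) with hu
  have huU : ∀ i, |u i| ≤ n * δ := by
    intro i
    have := hdx l i
    rw [hcl] at this
    rw [abs_sub_comm] at this
    exact this
  obtain ⟨μ, hμ, hμs⟩ := PM_solve X f0 (n * δ) hdx (by nlinarith) u (n * δ) huU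
  have hsμ : δ / (3 * n) - 4 * n ^ 3 * δ ^ 2 ≤ ∑ m, μ m := by
    have h1 := congrFun hμ j0
    simp only [Matrix.mulVec, dotProduct, PM, Matrix.of_apply] at h1
    have h2 : ∑ m, μ m - (1 - sgn (ε j0) * X (sv ε) j0) =
        ∑ m, (-sgn (ε j0) * (X (cv f0 m) j0 - cv f0 m j0)) * μ m := by
      have h3 : ∑ m, (-sgn (ε j0) * (X (cv f0 m) j0 - cv f0 m j0)) * μ m =
          -sgn (ε j0) * ∑ m, X (cv f0 m) j0 * μ m + ∑ m, μ m := by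
        rw [Finset.mul_sum, ← Finset.sum_add_distrib]
        refine Finset.sum_congr rfl fun m _ => ?_
        rw [hcj]
        linear_combination (μ m) * sgn_mul_self (ε j0)
      rw [h3, h1, hu]
      simp only [Pi.sub_apply, sv]
      linear_combination sgn_mul_self (ε j0)
    have h4 : |∑ m, (-sgn (ε j0) * (X (cv f0 m) j0 - cv f0 m j0)) * μ m| ≤ (n * δ) * ∑ m, |μ m| := by
      refine (Finset.abs_sum_le_sum_abs _ _).trans ?_
      rw [Finset.mul_sum]
      refine Finset.sum_le_sum fun m _ => ?_
      rw [abs_mul, abs_mul, abs_neg, abs_sgn, one_mul]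
      gcongr
      exact hdx m j0
    rw [← h2] at h4
    have h5 := (abs_le.1 h4).1
    have h6 : (n * δ) * ∑ m, |μ m| ≤ (n * δ) * (4 * n * (n * δ)) := by gcongr
    have h7 : (n * δ) * (4 * n * (n * δ)) = 4 * n ^ 3 * δ ^ 2 := by ring
    linarith
  set q := 1 - δ / (12 * n) - 2 * n ^ 2 * δ with hq
  set be := 2 * (n:ℝ) ^ 2 * δ with hbe
  have hτ : δ / (12 * n) ≤ δ := by
    rw [div_le_iff₀ (by positivity)]; nlinarith
  have hτ0 : 0 ≤ δ / (12 * n) := by positivity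
  have hq1 : 1/2 ≤ q := by nlinarith
  have hbe0 : 0 ≤ be := by positivity
  have hq2 : q ≤ 1 := by linarith
  let la : Fin n → ℝ := q • (Pi.single l 1 + μ) + be • Pi.single z 1
  refine ⟨f0, la, ?_, ?_, ?_⟩
  · intro m
    have h1 : |μ m| ≤ 4 * n * (n * δ) :=
      (Finset.single_le_sum (f := fun m => |μ m|) (fun _ _ => abs_nonneg _) (Finset.mem_univ m)).trans hμs
    have h2 : 4 * n * (n * δ) ≤ 1 / n := by
      rw [le_div_iff₀ hn0]; nlinarith
    have h3 : 0 ≤ (Pi.single l 1 : Fin n → ℝ) m := by rw [Pi.single_apply]; split_ifs <;> norm_num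
    have h4 : 0 ≤ (Pi.single z 1 : Fin n → ℝ) m := by rw [Pi.single_apply]; split_ifs <;> norm_num
    simp only [la, Pi.add_apply, Pi.smul_apply, smul_eq_mul]
    have h5 := (abs_le.1 h1).1
    have h6 : 0 ≤ be * (Pi.single z 1 : Fin n → ℝ) m := by positivity
    have h7 : 0 ≤ q * (Pi.single l 1 : Fin n → ℝ) m := by positivity
    have h8 : -(1 / (n:ℝ)) ≤ q * μ m := by
      have : -(1/(n:ℝ)) ≤ μ m := by linarith
      have : 0 < 1 / (n:ℝ) := by positivity
      nlinarith
    linarith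
  · have e1 : ∑ m, la m = q * (1 + ∑ m, μ m) + be := by
      simp only [la, Pi.add_apply, Pi.smul_apply, smul_eq_mul, Finset.sum_add_distrib, ← Finset.mul_sum]
      simp
    rw [e1]
    have e2 : 4 * n ^ 3 * δ ^ 2 ≤ δ / (12 * n) := by
      rw [le_div_iff₀ (by positivity)]; nlinarith
    have e3 : δ / (3 * n) = 4 * (δ / (12 * n)) := by field_simp; norm_num
    have e4 : δ / (48 * n) = (δ / (12 * n)) / 4 := by field_simp; norm_num
    rw [e3] at hsμ
    rw [e4]
    have e5 : 3 * (δ / (12 * n)) ≤ ∑ m, μ m := by linarith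
    have e6 : (1/2) * (3 * (δ / (12 * n))) ≤ q * ∑ m, μ m := by
      apply mul_le_mul hq1 e5 (by positivity) (by linarith)
    have e7 : q + be = 1 - δ / (12 * n) := by rw [hq]; ring
    linarith
  · have e1 : ∑ m, la m • X (cv f0 m) = (PM X f0).mulVec la := by
      ext i
      simp only [Finset.sum_apply, Pi.smul_apply, smul_eq_mul, Matrix.mulVec, dotProduct, PM,
        Matrix.of_apply]
      exact Finset.sum_congr rfl fun m _ => mul_comm _ _
    have e2 : ∀ m, (PM X f0).mulVec (Pi.single m 1) = X (cv f0 m) := by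
      intro m; rw [Matrix.mulVec_single_one]; ext i; simp [PM]
    rw [e1]
    simp only [la]
    rw [Matrix.mulVec_add, Matrix.mulVec_smul, Matrix.mulVec_smul, Matrix.mulVec_add, e2, e2, hμ, hcl,
      hXz, hcz, hu]
    simpa using hp

set_option maxHeartbeats 2000000 in
lemma gain_Kp {n : ℕ} (hn : 2 ≤ n) {K : Set (Fin n → ℝ)} {δ : ℝ} (hK : Bod K δ)
    (hs : 10000 * (n:ℝ)^6 * δ ≤ 1)
    (X Y : (Fin n → ℝ) → (Fin n → ℝ)) (h : ∀ f m, PtP K δ (cv f m) (X (cv f m)) (Y (cv f m)))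
    (ε : Fin n → ℤˣ) (j0 : Fin n) (y : Fin n → ℝ) (hy : y ∈ Kp K)
    (hp : 1 < (1 - δ / (12 * n) - 2 * n ^ 2 * δ) * (∑ i, sgn (ε i) * y i) +
      (2 * n ^ 2 * δ) * (sgn (ε j0) * y j0)) :
    ∃ (f0 : SFlag n) (la : Fin n → ℝ), (∀ m, -(1 / (n:ℝ)) ≤ la m) ∧
      1 + δ / (48 * n) ≤ ∑ m, la m ∧
      ∑ m, la m • ((1 / ((m:ℝ) + 1)) • Y (cv f0 m)) ∈ Kp K := by
  have hδ := hK.pos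
  have hn0 : (0:ℝ) < n := by positivity
  have hn1 : (1:ℝ) ≤ n := by exact_mod_cast (by omega : 1 ≤ n)
  have p0 := small_pow (by omega) hδ hs 0 (by norm_num)
  have p1 := small_pow (by omega) hδ hs 1 (by norm_num)
  have p2 := small_pow (by omega) hδ hs 2 (by norm_num)
  have p3 := small_pow (by omega) hδ hs 3 (by norm_num)
  have p4 := small_pow (by omega) hδ hs 4 (by norm_num)
  have p5 := small_pow (by omega) hδ hs 5 (by norm_num)
  rw [pow_one] at p1
  rw [pow_zero, one_mul] at p0
  have hn2 : (1:ℝ) ≤ (n:ℝ)^2 := one_le_pow₀ hn1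
  have hn3 : (n:ℝ)^2 ≤ (n:ℝ)^3 := pow_le_pow_right₀ hn1 (by norm_num)
  have hd2 : δ ≤ (n:ℝ)^2 * δ := by nlinarith
  have hd3 : (n:ℝ)^2 * δ ≤ (n:ℝ)^3 * δ := by nlinarith
  let z : Fin n := ⟨0, by omega⟩
  let o : Fin n := ⟨1, by omega⟩
  have hz : ∀ m : Fin n, z ≤ m := fun m => by rw [Fin.le_def]; simp [z]
  have hzo : Finset.Ioi z = Finset.Ici o := by
    ext m; rw [Finset.mem_Ioi, Finset.mem_Ici, Fin.lt_def, Fin.le_def]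
    simp only [z, o]; omega
  set b : Fin n → ℝ := fun i => sgn (ε i) * y i with hb
  have hbabs : ∀ i, |b i| = |y i| := fun i => by simp only [hb]; rw [abs_mul, abs_sgn, one_mul]
  set S := ∑ i, b i with hS
  set T := ∑ i, |y i| with hT
  have hT1 : T ≤ 1 + 2 * δ := l1_bound hK y hy
  have hyT : ∀ i, |y i| ≤ T := fun i =>
    Finset.single_le_sum (f := fun i => |y i|) (fun _ _ => abs_nonneg _) (Finset.mem_univ i)
  set be := 2 * (n:ℝ) ^ 2 * δ with hbe
  set ta := δ / (12 * n) with hta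
  have hbe0 : 0 ≤ be := by positivity
  have hta0 : 0 < ta := by positivity
  have htaδ : ta ≤ δ := by
    rw [hta, div_le_iff₀ (by positivity)]; nlinarith
  change 1 < (1 - ta - be) * S + be * b j0 at hp
  have hbj : b j0 ≤ 1 + 2 * δ := (le_abs_self _).trans ((hbabs j0).le.trans ((hyT j0).trans hT1))
  have hq : 0 < 1 - ta - be := by nlinarith
  have hS0 : 0 < S := by
    by_contra hc
    push Not at hc
    nlinarith
  have hS1 : 1 - 2 * be < S := by nlinarith
  have hTS : T ≤ S + 6 * n ^ 2 * δ := by nlinarith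
  have hbneg : ∀ i, -(3 * n^2 * δ) ≤ b i := by
    intro i
    have h1 : |b i| - b i ≤ ∑ i, (|b i| - b i) :=
      Finset.single_le_sum (f := fun i => |b i| - b i) (fun j _ => by linarith [le_abs_self (b j)])
        (Finset.mem_univ i)
    rw [Finset.sum_sub_distrib, ← hS] at h1
    have h2 : ∑ i, |b i| = T := Finset.sum_congr rfl fun i _ => hbabs i
    rw [h2] at h1
    linarith [neg_abs_le (b i)]
  -- sorting
  let σ := Tuple.sort (fun i => - b i)
  have hσ : Monotone ((fun i => - b i) ∘ σ) := Tuple.monotone_sort _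
  have hanti : ∀ {l l' : Fin n}, l ≤ l' → b (σ l') ≤ b (σ l) := by
    intro l l' hll
    have := hσ hll
    simp only [Function.comp] at this
    linarith
  have hbz : b j0 ≤ b (σ z) := by
    have := hanti (hz (σ.symm j0))
    simpa using this
  have hb01 : b (σ z) + b (σ o) ≤ T := by
    have hne : σ z ≠ σ o := by
      intro h1
      have := σ.injective h1
      simp [z, o] at this
    have h1 : ∑ i ∈ {σ z, σ o}, |y i| ≤ T :=
      Finset.sum_le_sum_of_subset_of_nonneg (Finset.subset_univ _) fun _ _ _ => abs_nonneg _
    rw [Finset.sum_pair hne, ← hbabs, ← hbabs] at h1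
    linarith [le_abs_self (b (σ z)), le_abs_self (b (σ o))]
  let f0 : SFlag n := (σ, ε)
  have hnδ : n * δ ≤ 1 / 2 := by linarith
  have hdy : ∀ m i, |Y (cv f0 m) i - cv f0 m i| ≤ 2 * (n * δ) := fun m i =>
    (h f0 m).dy hK hnδ (cv_SV f0 m) (cv_ne f0 m) i
  have hYz : Y (cv f0 z) = cv f0 z := ((h f0 z).one (by rw [cv_card])).2
  obtain ⟨nu, hnu, hnus⟩ := PM_solve Y f0 (2 * (n * δ)) hdy (by nlinarith) y 2
    (fun i => (hyT i).trans (by linarith))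
  have hnuM : ∑ m, |nu m| ≤ 8 * n := by linarith
  have herr : ∀ l, |tl nu l - b (σ l)| ≤ 16 * n^2 * δ := by
    intro l
    have h1 := PM_mulVec Y f0 nu (σ l)
    rw [hnu] at h1
    have h2 : f0.1.symm (σ l) = l := by simp [f0]
    rw [h2] at h1
    have h3 : tl nu l - b (σ l) =
        -sgn (ε (σ l)) * ∑ m, nu m * (Y (cv f0 m) (σ l) - cv f0 m (σ l)) := by
      simp only [hb]
      rw [h1]
      linear_combination (-tl nu l) * sgn_mul_self (ε (σ l))
    rw [h3, abs_mul, abs_neg, abs_sgn, one_mul]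
    refine (Finset.abs_sum_le_sum_abs _ _).trans ?_
    calc ∑ m, |nu m * (Y (cv f0 m) (σ l) - cv f0 m (σ l))| ≤ ∑ m, |nu m| * (2 * (n * δ)) := by
          refine Finset.sum_le_sum fun m _ => ?_
          rw [abs_mul]
          gcongr
          exact hdy m _
      _ = (∑ m, |nu m|) * (2 * (n * δ)) := by rw [Finset.sum_mul]
      _ ≤ (8 * n) * (2 * (n * δ)) := by gcongr
      _ = _ := by ring
  have hnulow : ∀ l, -(32 * n^2 * δ) ≤ nu l := by
    intro l
    have h1 := abs_le.1 (herr l)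
    have h2 := tl_eq nu l
    rcases Ioi_cases l with h3 | ⟨l', hl', h3⟩
    · rw [h3] at h2
      simp only [Finset.sum_empty, add_zero] at h2
      have := hbneg (σ l)
      nlinarith [h1.1]
    · rw [h3] at h2
      change tl nu l = nu l + tl nu l' at h2
      have h4 := abs_le.1 (herr l')
      have h5 := hanti hl'.le
      linarith [h1.1, h4.2]
  -- tail of the absolute values
  have htail : ∑ m ∈ Finset.Ioi z, |nu m| ≤ S - b j0 + 86 * n^3 * δ := by
    have h1 : ∑ m ∈ Finset.Ioi z, |nu m| ≤ ∑ m ∈ Finset.Ioi z, (nu m + 64 * n^2 * δ) := by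
      refine Finset.sum_le_sum fun m _ => ?_
      have := hnulow m
      have h64 : 0 ≤ (n:ℝ)^2 * δ := by positivity
      rw [abs_le]; constructor <;> linarith
    rw [Finset.sum_add_distrib, Finset.sum_const, nsmul_eq_mul] at h1
    have h2 : ∑ m ∈ Finset.Ioi z, nu m = tl nu o := by rw [hzo, tl]
    have h3 : ((Finset.Ioi z).card : ℝ) ≤ n := by
      have : (Finset.Ioi z).card ≤ n := by simpa using Finset.card_le_univ (Finset.Ioi z)
      exact_mod_cast this
    have h4 : ((Finset.Ioi z).card : ℝ) * (64 * n^2 * δ) ≤ n * (64 * n^2 * δ) := by gcongr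
    have h5 := (abs_le.1 (herr o)).2
    have h6 : (n:ℝ) * (64 * n^2 * δ) = 64 * (n^3 * δ) := by ring
    rw [h2] at h1
    linarith
  let la : Fin n → ℝ := fun m => ((m:ℝ) + 1) * nu m
  have hmn : ∀ m : Fin n, (m:ℝ) + 1 ≤ n := fun m => by exact_mod_cast m.2
  have hcvs : ∀ m, ∑ i, sgn (ε i) * cv f0 m i = (m:ℝ) + 1 := by
    intro m
    have h1 : ∀ i, sgn (ε i) * cv f0 m i = if cv f0 m i ≠ 0 then 1 else 0 := by
      intro i
      simp only [cv, f0]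
      split_ifs with h1 h2 h2
      · exact sgn_mul_self _
      · exact absurd (sgn_ne_zero _) h2
      · exact absurd rfl h2
      · simp
    simp only [h1]
    rw [Finset.sum_boole]
    have := cv_card f0 m
    rw [spt] at this
    rw [this]; push_cast; rfl
  have hve : ∀ m, |∑ i, sgn (ε i) * (Y (cv f0 m) i - cv f0 m i)| ≤ be := by
    intro m
    refine (Finset.abs_sum_le_sum_abs _ _).trans ?_
    refine (Finset.sum_le_card_nsmul _ _ (2 * (n * δ)) fun i _ => ?_).trans (le_of_eq ?_)
    · rw [abs_mul, abs_sgn, one_mul]; exact hdy m i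
    · simp [hbe]; ring
  have hSla : S = ∑ m, la m + ∑ m, nu m * ∑ i, sgn (ε i) * (Y (cv f0 m) i - cv f0 m i) := by
    have h1 : S = ∑ i, sgn (ε i) * ∑ m, Y (cv f0 m) i * nu m := by
      rw [hS]
      refine Finset.sum_congr rfl fun i _ => ?_
      simp only [hb]
      rw [← hnu]
      simp [Matrix.mulVec, dotProduct, PM]
    have h2 : S = ∑ m, nu m * ∑ i, sgn (ε i) * Y (cv f0 m) i := by
      rw [h1]
      simp only [Finset.mul_sum]
      rw [Finset.sum_comm]
      refine Finset.sum_congr rfl fun m _ => Finset.sum_congr rfl fun i _ => ?_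
      ring
    rw [h2, ← Finset.sum_add_distrib]
    refine Finset.sum_congr rfl fun m _ => ?_
    simp only [la, mul_sub, Finset.sum_sub_distrib]
    rw [hcvs]
    ring
  have hterm : ∑ m, nu m * ∑ i, sgn (ε i) * (Y (cv f0 m) i - cv f0 m i) ≤
      be * (S - b j0 + 86 * n^3 * δ) := by
    have h1 : ∑ m, nu m * ∑ i, sgn (ε i) * (Y (cv f0 m) i - cv f0 m i) =
        ∑ m ∈ Finset.Ioi z, nu m * ∑ i, sgn (ε i) * (Y (cv f0 m) i - cv f0 m i) := by
      symm
      apply Finset.sum_subset (Finset.subset_univ _)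
      intro m _ hm
      have : m = z := by
        rw [Finset.mem_Ioi, not_lt] at hm
        exact le_antisymm hm (hz m)
      rw [this, hYz]; simp
    rw [h1]
    calc _ ≤ ∑ m ∈ Finset.Ioi z, |nu m| * be := by
          refine Finset.sum_le_sum fun m _ => ?_
          refine (le_abs_self _).trans ?_
          rw [abs_mul]
          gcongr
          exact hve m
      _ = be * ∑ m ∈ Finset.Ioi z, |nu m| := by rw [← Finset.sum_mul, mul_comm]
      _ ≤ _ := by gcongr
  refine ⟨f0, la, ?_, ?_, ?_⟩
  · intro m
    have h1 := hnulow m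
    have h2 := hmn m
    have h3 : 32 * n^3 * δ ≤ 1 / n := by
      rw [le_div_iff₀ hn0]; nlinarith
    simp only [la]
    have h4 : ((m:ℝ) + 1) * (-(32 * n^2 * δ)) ≤ ((m:ℝ) + 1) * nu m := by gcongr
    have h5 : ((m:ℝ) + 1) * (32 * n^2 * δ) ≤ n * (32 * n^2 * δ) := by gcongr
    have h6 : (n:ℝ) * (32 * n^2 * δ) = 32 * n^3 * δ := by ring
    linarith
  · have e4 : δ / (48 * n) = ta / 4 := by rw [hta]; field_simp; norm_num
    rw [e4]
    have h1 : ∑ m, la m = S - ∑ m, nu m * ∑ i, sgn (ε i) * (Y (cv f0 m) i - cv f0 m i) := by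
      linarith
    have h2 : be * (86 * n^3 * δ) ≤ ta / 4 := by
      have : be * (86 * n^3 * δ) = 172 * n^5 * δ * δ := by rw [hbe]; ring
      rw [this, hta, div_div, le_div_iff₀ (by positivity)]
      nlinarith
    have h3 : 1 / 2 ≤ S := by nlinarith
    nlinarith
  · have e1 : ∑ m, la m • ((1 / ((m:ℝ) + 1)) • Y (cv f0 m)) = y := by
      rw [← hnu]
      ext i
      simp only [Finset.sum_apply, Pi.smul_apply, smul_eq_mul, Matrix.mulVec, dotProduct, PM,
        Matrix.of_apply, la]
      refine Finset.sum_congr rfl fun m _ => ?_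
      have : (m:ℝ) + 1 ≠ 0 := by positivity
      field_simp
    rw [e1]; exact hy

lemma sep_Kp {n : ℕ} {K : Set (Fin n → ℝ)} {δ : ℝ} (hK : Bod K δ) (p : Fin n → ℝ) (hp : p ∉ K) :
    ∃ y ∈ Kp K, 1 < ∑ i, p i * y i := by
  obtain ⟨g, u, hu, hgp⟩ := geometric_hahn_banach_closed_point hK.cvx hK.cpt.isClosed hp
  have h0 : (0 : Fin n → ℝ) ∈ K := hK.sup 0 (fun i => by
    have := hK.half
    simp; linarith)
  have hu0 : 0 < u := by simpa using hu 0 h0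
  have key : ∀ z : Fin n → ℝ, ∑ i, z i * (g (Pi.single i 1) / u) = g z / u := by
    intro z
    have h1 : z = ∑ i, z i • (Pi.single i (1:ℝ) : Fin n → ℝ) := by
      ext j
      simp [Finset.sum_apply, Pi.single_apply]
    conv_rhs => rw [h1]
    rw [map_sum, Finset.sum_div]
    refine Finset.sum_congr rfl fun i _ => ?_
    rw [map_smul, smul_eq_mul, mul_div_assoc]
  refine ⟨fun i => g (Pi.single i 1) / u, ?_, ?_⟩
  · intro z hz
    rw [key, div_le_one hu0]
    exact (hu z hz).le
  · rw [key, one_lt_div hu0]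
    exact hgp

lemma gain {n : ℕ} (hn : 2 ≤ n) {K : Set (Fin n → ℝ)} {δ : ℝ} (hK : Bod K δ)
    (hs : 10000 * (n:ℝ)^6 * δ ≤ 1)
    (X Y : (Fin n → ℝ) → (Fin n → ℝ)) (h : ∀ f m, PtP K δ (cv f m) (X (cv f m)) (Y (cv f m)))
    (z : Fin n → ℝ) (hz : ∀ i, |z i| ≤ 1 - δ / 2) (hzK : z ∉ K) :
    (∃ (f0 : SFlag n) (la : Fin n → ℝ), (∀ m, -(1 / (n:ℝ)) ≤ la m) ∧
      1 + δ / (48 * n) ≤ ∑ m, la m ∧ ∑ m, la m • X (cv f0 m) ∈ K) ∨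
    (∃ (f0 : SFlag n) (la : Fin n → ℝ), (∀ m, -(1 / (n:ℝ)) ≤ la m) ∧
      1 + δ / (48 * n) ≤ ∑ m, la m ∧
      ∑ m, la m • ((1 / ((m:ℝ) + 1)) • Y (cv f0 m)) ∈ Kp K) := by
  have hhalf := hK.half
  obtain ⟨ε, hε⟩ := vertex_exists hK.cvx (1 - δ / 2) (by linarith) z hz hzK
  let l : Fin n := ⟨n - 1, by omega⟩
  have hl : ∀ m : Fin n, m ≤ l := fun m => by
    rw [Fin.le_def]; have := m.2; simp only [l]; omega
  have hcl := cv_last ((1, ε) : SFlag n) l hl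
  have hx : X (sv ε) ∈ K := by
    have := (h (1, ε) l).memx
    rw [hcl] at this
    exact this
  obtain ⟨j0, hj⟩ := vertex_gap (by omega) hK ε hε (X (sv ε)) hx
  by_cases hp : (1 - δ/(12*n) - 2*n^2*δ) • sv ε + (2*n^2*δ) • Pi.single j0 (sgn (ε j0)) ∈ K
  · left
    exact gain_K hn hK hs X Y h ε j0 hj hp
  · right
    obtain ⟨y, hy, hy1⟩ := sep_Kp hK _ hp
    refine gain_Kp hn hK hs X Y h ε j0 y hy (hy1.trans_le (le_of_eq ?_))
    have e : ∀ i, ((1 - δ/(12*n) - 2*n^2*δ) • sv ε + (2*n^2*δ) • (Pi.single j0 (sgn (ε j0))) : Fin n → ℝ) i * y i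
      = (1 - δ/(12*n) - 2*n^2*δ) * (sgn (ε i) * y i) +
        (if i = j0 then (2*n^2*δ) * (sgn (ε j0) * y j0) else 0) := by
      intro i
      by_cases hi : i = j0
      · subst hi; simp [sv]; ring
      · simp [sv, hi]; ring
    simp only [e]
    rw [Finset.sum_add_distrib, ← Finset.mul_sum, Finset.sum_ite_eq']
    simp

lemma gain' {n : ℕ} (hn : 2 ≤ n) {K : Set (Fin n → ℝ)} {δ : ℝ} (hK : Bod K δ)
    (hs : 10000 * (n:ℝ)^6 * δ ≤ 1)
    (X Y : (Fin n → ℝ) → (Fin n → ℝ)) (h : ∀ f m, PtP K δ (cv f m) (X (cv f m)) (Y (cv f m)))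
    (z : Fin n → ℝ) (hz : ∀ i, |z i| ≤ 1 - δ / 2) (hzK : z ∉ K)
    (hmemY : ∀ f (m : Fin n), (1 / ((m:ℝ) + 1)) • Y (cv f m) ∈ Kp K) :
    ∃ (k1 k2 : ℝ), 0 ≤ k1 ∧ 0 ≤ k2 ∧ k1 + k2 = δ / (48 * n) ∧
    (∃ (f0 : SFlag n) (la : Fin n → ℝ), (∀ m, -(1 / (n:ℝ)) ≤ la m) ∧
      1 + k1 ≤ ∑ m, la m ∧ ∑ m, la m • X (cv f0 m) ∈ K) ∧
    (∃ (f0 : SFlag n) (la : Fin n → ℝ), (∀ m, -(1 / (n:ℝ)) ≤ la m) ∧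
      1 + k2 ≤ ∑ m, la m ∧
      ∑ m, la m • ((1 / ((m:ℝ) + 1)) • Y (cv f0 m)) ∈ Kp K) := by
  have hpos : 0 ≤ δ / (48 * n) := by have := hK.pos; positivity
  let m0 : Fin n := ⟨0, by omega⟩
  let la0 : Fin n → ℝ := Pi.single m0 1
  let f1 : SFlag n := (1, 1)
  have hl1 : ∀ m, -(1 / (n:ℝ)) ≤ la0 m := by
    intro m
    have h1 : 0 ≤ la0 m := by
      simp only [la0, Pi.single_apply]; split_ifs <;> norm_num
    have h2 : 0 ≤ 1 / (n:ℝ) := by positivity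
    linarith
  have hl2 : 1 + 0 ≤ ∑ m, la0 m := by simp [la0]
  have hl3 : ∀ v : Fin n → (Fin n → ℝ), ∑ m, la0 m • v m = v m0 := by
    intro v
    rw [Finset.sum_eq_single m0]
    · simp [la0]
    · intro b _ hb; simp [la0, hb]
    · simp
  rcases gain hn hK hs X Y h z hz hzK with hg | hg
  · refine ⟨_, 0, hpos, le_rfl, by ring, hg, f1, la0, hl1, hl2, ?_⟩
    rw [hl3]; exact hmemY _ _
  · refine ⟨0, _, le_rfl, hpos, by ring, ⟨f1, la0, hl1, hl2, ?_⟩, hg⟩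
    rw [hl3]; exact (h _ _).memx

lemma Kp_convex {n : ℕ} (K : Set (Fin n → ℝ)) : Convex ℝ (Kp K) := by
  intro x hx y hy a b ha hb hab z hz
  have h1 := hx z hz
  have h2 := hy z hz
  have : ∑ i, z i * (a • x + b • y) i = a * ∑ i, z i * x i + b * ∑ i, z i * y i := by
    rw [Finset.mul_sum, Finset.mul_sum, ← Finset.sum_add_distrib]
    refine Finset.sum_congr rfl fun i _ => ?_
    simp; ring
  rw [this]; nlinarith

lemma prod_w (n : ℕ) : ∏ m : Fin n, (1 / ((m:ℝ) + 1)) = 1 / (n.factorial : ℝ) := by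
  rw [Fin.prod_univ_eq_prod_range (fun m : ℕ => 1 / ((m:ℝ) + 1)) n]
  simp only [one_div]
  rw [Finset.prod_inv_distrib]
  congr 1
  rw [← Finset.prod_range_add_one_eq_factorial]
  push_cast; rfl

lemma arith_main (C c1 N δ A B k1 k2 M : ℝ) (hC : 0 ≤ C) (hc : 0 < c1) (hN : 1 ≤ N) (hδ : 0 < δ)
    (hδ1 : δ ≤ 1) (hM : M = 2 * N^3 + 4 * C * N^2 + c1) (hMδ : M * δ ≤ 1)
    (hAB : 0 ≤ A + B) (hA : |A| ≤ N * N * (2 * (N * δ))) (hB : |B| ≤ N * N * (2 * (N * δ)))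
    (hk1 : 0 ≤ k1) (hk2 : 0 ≤ k2) (hk : k1 + k2 = δ / (48 * N))
    (hd : 96 * N * (8 * C * N^2 + M^2) * δ ≤ c1) :
    0 ≤ 1 + A - C * (2 * (N * δ))^2 + c1 * k1 ∧ 0 ≤ 1 + B - C * (2 * (N * δ))^2 + c1 * k2 ∧
    1 + c1 * δ / (96 * N) ≤
      (1 + A - C * (2 * (N * δ))^2 + c1 * k1) * (1 + B - C * (2 * (N * δ))^2 + c1 * k2) := by
  have hN0 : 0 < N := by linarith
  have hkd : δ / (48 * N) ≤ δ := by
    rw [div_le_iff₀ (by positivity)]; nlinarith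
  have e1 : C * (2 * (N * δ))^2 ≤ 4 * C * N^2 * δ := by
    have : C * (2 * (N * δ))^2 = 4 * C * N^2 * δ * δ := by ring
    rw [this]
    have : 0 ≤ 4 * C * N^2 * δ := by positivity
    nlinarith
  have e0 : 0 ≤ C * (2 * (N * δ))^2 := by positivity
  have hc1 : c1 * k1 ≤ c1 * δ := by gcongr; linarith
  have hc2 : c1 * k2 ≤ c1 * δ := by gcongr; linarith
  have hc1' : 0 ≤ c1 * k1 := by positivity
  have hc2' : 0 ≤ c1 * k2 := by positivity
  have eM : M * δ = 2 * N^3 * δ + 4 * C * N^2 * δ + c1 * δ := by rw [hM]; ring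
  have eA : N * N * (2 * (N * δ)) = 2 * N^3 * δ := by ring
  rw [eA] at hA hB
  have hA' := abs_le.1 hA
  have hB' := abs_le.1 hB
  have h4 : 0 ≤ 4 * C * N^2 * δ := by positivity
  have h5 : 0 ≤ c1 * δ := by positivity
  set a := A - C * (2 * (N * δ))^2 + c1 * k1 with ha
  set b := B - C * (2 * (N * δ))^2 + c1 * k2 with hb
  have ha1 : |a| ≤ M * δ := by rw [abs_le]; constructor <;> linarith [hA'.1, hA'.2]
  have hb1 : |b| ≤ M * δ := by rw [abs_le]; constructor <;> linarith [hB'.1, hB'.2]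
  have hab : -(M^2 * δ^2) ≤ a * b := by
    have h1 : |a * b| ≤ (M * δ) * (M * δ) := by
      rw [abs_mul]; exact mul_le_mul ha1 hb1 (abs_nonneg _) ((abs_nonneg _).trans ha1)
    have := (abs_le.1 h1).1
    nlinarith
  have hsum : c1 * (δ / (48 * N)) - 8 * C * N^2 * δ^2 ≤ a + b := by
    have : c1 * k1 + c1 * k2 = c1 * (δ / (48 * N)) := by rw [← hk]; ring
    have : C * (2 * (N * δ))^2 = 4 * C * N^2 * δ^2 := by ring
    linarith
  have hfin : (8 * C * N^2 + M^2) * δ^2 ≤ c1 * δ / (96 * N) := by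
    rw [le_div_iff₀ (by positivity)]
    nlinarith
  have e5 : c1 * (δ / (48 * N)) = 2 * (c1 * δ / (96 * N)) := by field_simp; norm_num
  have ra : 1 + A - C * (2 * (N * δ))^2 + c1 * k1 = 1 + a := by rw [ha]; ring
  have rb : 1 + B - C * (2 * (N * δ))^2 + c1 * k2 = 1 + b := by rw [hb]; ring
  rw [ra, rb]
  refine ⟨by linarith [(abs_le.1 ha1).1], by linarith [(abs_le.1 hb1).1], ?_⟩
  have : (1 + a) * (1 + b) = 1 + (a + b) + a * b := by ring
  rw [this]
  linarith

lemma main_pi (n : ℕ) (hn : 2 ≤ n) : ∃ δ₀ : ℝ, 0 < δ₀ ∧ δ₀ ≤ 1 / 2 ∧ ∃ c : ℝ, 0 < c ∧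
    ∀ (δ : ℝ) (K : Set (Fin n → ℝ)), δ ≤ δ₀ → Bod K δ →
      (∀ t, SV t → (spt t).card = 1 → t ∈ K) →
      ∀ z : Fin n → ℝ, (∀ i, |z i| ≤ 1 - δ / 2) → z ∉ K →
      ENNReal.ofReal (4 ^ n / n.factorial + c * δ) ≤ volume K * volume (Kp K) := by
  obtain ⟨C, hC, c1, hc1, η₀, hη₀, H⟩ := first_order n (by omega)
  have hN : (1:ℝ) ≤ n := by exact_mod_cast (by omega : 1 ≤ n)
  have hN0 : (0:ℝ) < n := by linarith
  set M : ℝ := 2 * n^3 + 4 * C * n^2 + c1 with hM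
  have hM0 : 0 < M := by positivity
  have hf : (0:ℝ) < n.factorial := by exact_mod_cast n.factorial_pos
  refine ⟨min (1/2) (min (1 / (10000 * (n:ℝ)^6)) (min (η₀ / (2 * n)) (min (1 / M)
    (c1 / (96 * n * (8 * C * n^2 + M^2)))))), by positivity, min_le_left _ _,
    4 ^ n / n.factorial * (c1 / (96 * n)), by positivity, ?_⟩
  intro δ K hδ hK hunit z hz hzK
  simp only [le_min_iff] at hδ
  obtain ⟨d1, d2, d3, d4, d5⟩ := hδ
  have hpos := hK.pos
  rw [le_div_iff₀ (by positivity)] at d2 d3 d4 d5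
  have hs : 10000 * (n:ℝ)^6 * δ ≤ 1 := by linarith
  have hnδ : n * δ ≤ 1 / 2 := by
    have := small_pow (by omega) hpos hs 1 (by norm_num)
    rw [pow_one] at this
    linarith
  obtain ⟨X, Y, hX0, hY0, h⟩ := choose_XY hK hunit
  have hmemY : ∀ f (m : Fin n), (1 / ((m:ℝ) + 1)) • Y (cv f m) ∈ Kp K := by
    intro f m
    have := (h f m).memy
    rw [cv_card] at this
    push_cast at this
    exact this
  have hdy : ∀ f m i, |Y (cv f m) i - cv f m i| ≤ 2 * (n * δ) := fun f m i =>
    (h f m).dy hK hnδ (cv_SV f m) (cv_ne f m) i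
  have hdx : ∀ f m i, |X (cv f m) i - cv f m i| ≤ 2 * (n * δ) := fun f m i => by
    have h1 := (h f m).dx hK (cv_SV f m) i
    have h2 : 0 ≤ n * δ := by positivity
    linarith
  have hA := AA_bound X _ hdx
  have hB := AA_bound Y _ hdy
  have hAB := AA_nonneg hnδ X Y h
  obtain ⟨k1, k2, hk1, hk2, hk, ⟨f1, la1, p1, q1, r1⟩, ⟨f2, la2, p2, q2, r2⟩⟩ :=
    gain' hn hK hs X Y h z hz hzK hmemY
  have hkd : δ / (48 * n) ≤ 1 := by
    rw [div_le_iff₀ (by positivity)]; linarith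
  have h0 : (0 : Fin n → ℝ) ∈ K := hK.sup 0 (fun i => by simp; linarith)
  have V1 := H K hK.cvx h0 (fun _ => 1) (fun _ => one_pos) X hX0 (2 * (n * δ)) (by positivity) hdx
    (by linarith) (fun f m => by rw [one_smul]; exact (h f m).memx) f1 la1 k1 hk1 (by linarith) p1 q1
    (by simpa using r1)
  have V2 := H (Kp K) (Kp_convex K) (by intro z _; simp) (fun m => 1 / ((m:ℝ) + 1))
    (fun m => by positivity) Y hY0 (2 * (n * δ)) (by positivity) hdy
    (by linarith) hmemY f2 la2 k2 hk2 (by linarith) p2 q2 r2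
  rw [prod_w] at V2
  obtain ⟨a1, a2, a3⟩ := arith_main C c1 n δ (AA X) (AA Y) k1 k2 M hC hc1 hN hpos (by linarith) hM
    (by linarith) hAB hA hB hk1 hk2 hk (by linarith)
  refine le_trans ?_ (mul_le_mul' V1 V2)
  rw [← ENNReal.ofReal_mul (by simp only [Finset.prod_const_one]; positivity)]
  apply ENNReal.ofReal_le_ofReal
  have e4 : (4:ℝ)^n = 2^n * 2^n := by rw [← mul_pow]; norm_num
  have g : (0:ℝ) ≤ 4^n / n.factorial := by positivity
  calc (4:ℝ) ^ n / n.factorial + 4 ^ n / n.factorial * (c1 / (96 * n)) * δ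
      = 4 ^ n / n.factorial * (1 + c1 * δ / (96 * n)) := by ring
    _ ≤ 4 ^ n / n.factorial * _ := mul_le_mul_of_nonneg_left a3 g
    _ = _ := by rw [e4]; simp only [Finset.prod_const_one]; ring

lemma spt_one {n : ℕ} (t : Fin n → ℝ) (ht : SV t) (h1 : (spt t).card = 1) :
    ∃ j, t = Pi.single j 1 ∨ t = - Pi.single j 1 := by
  obtain ⟨j, hj⟩ := Finset.card_eq_one.1 h1
  have hz : ∀ i, i ≠ j → t i = 0 := by
    intro i hi
    by_contra h
    have : i ∈ spt t := by simp [spt, h]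
    rw [hj, Finset.mem_singleton] at this
    exact hi this
  have hjm : t j ≠ 0 := by
    have : j ∈ spt t := by rw [hj]; simp
    simpa [spt] using this
  refine ⟨j, ?_⟩
  rcases ht j with h | h | h
  · exact absurd h hjm
  · left; ext i
    by_cases hi : i = j
    · subst hi; simp [h]
    · simp [hi, hz i hi]
  · right; ext i
    by_cases hi : i = j
    · subst hi; simp [h]
    · simp [hi, hz i hi]

/-- if `K ⊆ B∞ⁿ` is an origin-symmetric convex body with `±e_j ∈ ∂K`,
`(1−δ)B∞ⁿ ⊆ K` with `δ ≤ δ₀` minimal, then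
`volₙ(K)·volₙ(K*) ≥ 4ⁿ/n! + cδ`. -/
theorem volume_product_lower_bound (n : ℕ) (hn : 2 ≤ n) :
    ∃ δ₀ : ℝ, 0 < δ₀ ∧ ∃ c : ℝ, 0 < c ∧
      ∀ δ : ℝ, 0 < δ → δ ≤ δ₀ →
        ∀ K : Set (EuclideanSpace ℝ (Fin n)),
          Convex ℝ K → IsCompact K → (interior K).Nonempty → K = -K →
          K ⊆ cube n →
          (∀ j : Fin n, stdVec n j ∈ frontier K ∧ -stdVec n j ∈ frontier K) →
          (1 - δ) • cube n ⊆ K →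
          (∀ δ' : ℝ, 0 ≤ δ' → δ' < δ → ¬ (1 - δ') • cube n ⊆ K) →
          volume K * volume (polarBody K) ≥
            (4 : ℝ≥0∞) ^ n / (n.factorial : ℝ≥0∞) + ENNReal.ofReal (c * δ) := by

  obtain ⟨δ₀, hδ₀, hhalf, c, hc, H⟩ := main_pi n hn
  refine ⟨δ₀, hδ₀, c, hc, ?_⟩
  intro δ hδ hδle K hcvx hcpt _ _ hsub hfr hsup hmin
  set e : EuclideanSpace ℝ (Fin n) ≃L[ℝ] (Fin n → ℝ) := EuclideanSpace.equiv (Fin n) ℝ with he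
  have hmp : MeasurePreserving (WithLp.toLp 2 : (Fin n → ℝ) → EuclideanSpace ℝ (Fin n)) :=
    PiLp.volume_preserving_toLp (Fin n)
  set K' : Set (Fin n → ℝ) := WithLp.toLp 2 ⁻¹' K with hK'
  have hlin : K' = e.symm ⁻¹' K := rfl
  have hclosed : IsClosed K := hcpt.isClosed
  have hd1 : 0 < 1 - δ := by linarith
  have scale : ∀ (a : ℝ), 0 < a → ∀ x : EuclideanSpace ℝ (Fin n), (∀ i, |x i| ≤ a) →
      x ∈ a • cube n := by
    intro a ha x hx
    rw [Set.mem_smul_set_iff_inv_smul_mem₀ ha.ne']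
    intro i
    rw [PiLp.smul_apply, smul_eq_mul, abs_mul, abs_of_pos (inv_pos.2 ha), inv_mul_le_iff₀ ha, mul_one]
    exact hx i
  have hBod : Bod K' δ := by
    refine ⟨?_, ?_, ?_, ?_, hδ, by linarith⟩
    · rw [hlin]; exact hcvx.linear_preimage e.symm.toLinearMap
    · rw [hlin, ← e.image_eq_preimage_symm]; exact hcpt.image e.continuous
    · intro z hz i
      exact hsub hz i
    · intro z hz
      exact hsup (scale (1 - δ) hd1 _ hz)
  have hunit : ∀ t, SV t → (spt t).card = 1 → t ∈ K' := by
    intro t ht h1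
    obtain ⟨j, h | h⟩ := spt_one t ht h1
    · have := hclosed.frontier_subset (hfr j).1
      rw [h]; exact this
    · have := hclosed.frontier_subset (hfr j).2
      rw [h]; exact this
  have hz := hmin (δ / 2) (by linarith) (by linarith)
  rw [Set.not_subset] at hz
  obtain ⟨z, ⟨u, hu, rfl⟩, hzK⟩ := hz
  have key := H δ K' hδle hBod hunit (WithLp.ofLp ((1 - δ / 2) • u)) (by
    intro i
    have h1 : |u i| ≤ 1 := hu i
    have h2 : 0 < 1 - δ / 2 := by linarith
    rw [PiLp.smul_apply, smul_eq_mul, abs_mul, abs_of_pos h2]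
    nlinarith) hzK
  have v1 : volume K' = volume K :=
    hmp.measure_preimage hclosed.measurableSet.nullMeasurableSet
  have hpol : Kp K' = WithLp.toLp 2 ⁻¹' (polarBody K) := by
    ext ξ
    constructor
    · intro h x hx
      have := h (WithLp.ofLp x) hx
      simp only [PiLp.inner_apply, RCLike.inner_apply, conj_trivial]
      refine le_trans (le_of_eq ?_) this
      exact Finset.sum_congr rfl fun i _ => mul_comm _ _
    · intro h x hx
      have := h (WithLp.toLp 2 x) hx
      simp only [PiLp.inner_apply, RCLike.inner_apply, conj_trivial] at this
      refine le_trans (le_of_eq ?_) this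
      exact Finset.sum_congr rfl fun i _ => mul_comm _ _
  have hpc : IsClosed (polarBody K) := by
    have : polarBody K = ⋂ x ∈ K, {ξ | ⟪x, ξ⟫ ≤ 1} := by
      ext ξ; simp [polarBody]
    rw [this]
    exact isClosed_biInter fun x _ => isClosed_le (by fun_prop) continuous_const
  have v2 : volume (Kp K') = volume (polarBody K) := by
    rw [hpol]
    exact hmp.measure_preimage hpc.measurableSet.nullMeasurableSet
  rw [v1, v2] at key
  refine le_trans (le_of_eq ?_) key
  have hf : (0:ℝ) < n.factorial := by exact_mod_cast n.factorial_pos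
  rw [ENNReal.ofReal_add (by positivity) (by positivity), ENNReal.ofReal_div_of_pos hf,
    ENNReal.ofReal_pow (by norm_num), ENNReal.ofReal_natCast]
  norm_num
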